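/- arXiv:0804.2313 — 7 statements merged into one kernel-verified Lean document; each statement's English description precedes it below -/
import Mathlib

section
/- For every t > 0 and every Schwartz function ψ on ℝ, ‖ψ‖_{L^∞}² ≤ (1/(2t)) ‖ψ‖_{L²} ‖𝒰(t)( x · 𝒰(−t)ψ )‖_{L²}. -/
/-!
Write `J ψ = 𝒰(t)(x · 𝒰(-t)ψ)`. On the Fourier side multiplication by `x` is `i ∂_ξ`, so
conjugating it by `e^{itξ²}` gives `J ψ = x ψ - 2it ψ'` (`schrodU_conj_mul`). With the chirp
`e^{ix²/(4t)}` this reads `J ψ = -2it e^{-ix²/(4t)} (e^{ix²/(4t)} ψ)'`, so that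
`G = e^{ix²/(4t)} ψ` satisfies `|G| = |ψ|` and `|G'| = |J ψ| / (2t)`. The bound is therefore the
one-dimensional inequality `‖G‖_∞² ≤ ‖G‖₂ ‖G'‖₂` (`norm_sq_le_eLpNorm_mul`), which follows by
integrating `(|G|²)'` over both half-lines ending at `x` and applying Cauchy–Schwarz.

Chirps have temperate growth, so multiplication by them preserves the Schwartz space; this makes
every Fourier inversion and integrability statement an instance of Schwartz-space facts.
-/

open MeasureTheory Filter Real Set
open scoped ENNReal Topology

/-- The Fourier transform normalized by `f̂(ξ) = ∫ e^{-ixξ} f(x) dx`. -/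
noncomputable def FT (f : ℝ → ℂ) (ξ : ℝ) : ℂ :=
  ∫ x : ℝ, Complex.exp (-(Complex.I * x * ξ)) * f x

/-- The free Schrödinger group `𝒰(t)`, the Fourier multiplier with symbol `e^{itξ²}`,
realized via the inverse Fourier transform. -/
noncomputable def schrodU (t : ℝ) (f : ℝ → ℂ) : ℝ → ℂ :=
  fun x => (2 * π : ℝ)⁻¹ •
    ∫ ξ : ℝ, Complex.exp (Complex.I * x * ξ) * (Complex.exp (Complex.I * t * ξ ^ 2) * FT f ξ)

open scoped FourierTransform SchwartzMap ContDiff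

/-! ### Chirps as multipliers on the Schwartz space -/

lemma hasTemperateGrowth_cexp_mul_I :
    Function.HasTemperateGrowth (fun x : ℝ => Complex.exp (x * Complex.I)) := by
  have hd : ∀ x : ℝ, HasDerivAt (fun x : ℝ => Complex.exp (x * Complex.I))
      (Complex.I * Complex.exp (x * Complex.I)) x := by
    intro x
    have := ((Complex.ofRealCLM.hasDerivAt (x := x)).mul_const Complex.I).cexp
    simpa [mul_comm] using this
  have hn : ∀ n : ℕ, iteratedDeriv n (fun x : ℝ => Complex.exp (x * Complex.I)) =
      fun x : ℝ => Complex.I ^ n * Complex.exp (x * Complex.I) := by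
    intro n
    induction n with
    | zero => simp
    | succ n ih =>
      rw [iteratedDeriv_succ, ih]
      ext x
      rw [((hd x).const_mul _).deriv]
      ring
  refine ⟨?_, fun n => ⟨0, 1, fun x => ?_⟩⟩
  · exact (Complex.ofRealCLM.contDiff.mul contDiff_const).cexp
  · rw [norm_iteratedFDeriv_eq_norm_iteratedDeriv, hn]
    simp [Complex.norm_exp_ofReal_mul_I]

/-- The chirp `x ↦ e^{icx²}`. -/
noncomputable def chirp (c x : ℝ) : ℂ := Complex.exp ((c * x ^ 2 : ℝ) * Complex.I)

lemma norm_chirp (c x : ℝ) : ‖chirp c x‖ = 1 := Complex.norm_exp_ofReal_mul_I _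

lemma chirp_mul_chirp_neg (c x : ℝ) : chirp c x * chirp (-c) x = 1 := by
  rw [chirp, chirp, ← Complex.exp_add, ← Complex.exp_zero]
  congr 1
  push_cast
  ring

lemma hasTemperateGrowth_chirp (c : ℝ) : (chirp c).HasTemperateGrowth := by
  have h : Function.HasTemperateGrowth (fun x : ℝ => c * x ^ 2) := by fun_prop
  exact hasTemperateGrowth_cexp_mul_I.comp h

lemma hasDerivAt_chirp (c x : ℝ) :
    HasDerivAt (chirp c) (2 * c * x * Complex.I * chirp c x) x := by
  have h : HasDerivAt (fun x : ℝ => c * x ^ 2) (c * (2 * x)) x := by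
    simpa using (hasDerivAt_pow 2 x).const_mul c
  have := (h.ofReal_comp.mul_const Complex.I).cexp
  refine this.congr_deriv ?_
  rw [chirp]
  push_cast
  ring

/-- Multiplication by the chirp `e^{icx²}` on Schwartz functions. -/
noncomputable def chirpMul (c : ℝ) (f : 𝓢(ℝ, ℂ)) : 𝓢(ℝ, ℂ) :=
  SchwartzMap.smulLeftCLM ℂ (chirp c) f

lemma chirpMul_apply (c : ℝ) (f : 𝓢(ℝ, ℂ)) (x : ℝ) : chirpMul c f x = chirp c x * f x :=
  SchwartzMap.smulLeftCLM_apply_apply (hasTemperateGrowth_chirp c) f x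

lemma deriv_chirpMul (c : ℝ) (f : 𝓢(ℝ, ℂ)) (x : ℝ) :
    deriv (chirpMul c f) x = chirp c x * (2 * c * x * Complex.I * f x + deriv f x) := by
  have h : (chirpMul c f : ℝ → ℂ) = fun x => chirp c x * f x := funext (chirpMul_apply c f)
  rw [h]
  refine (((hasDerivAt_chirp c x).mul (f.hasDerivAt x)).congr_deriv ?_).deriv
  ring

/-- Multiplication by the coordinate `x` on Schwartz functions. -/
noncomputable def coordMul (f : 𝓢(ℝ, ℂ)) : 𝓢(ℝ, ℂ) :=
  SchwartzMap.smulLeftCLM ℂ (fun x : ℝ => (x : ℂ)) f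

lemma coordMul_apply (f : 𝓢(ℝ, ℂ)) (x : ℝ) : coordMul f x = x * f x :=
  SchwartzMap.smulLeftCLM_apply_apply Function.Complex.hasTemperateGrowth_ofReal f x

/-! ### Comparison with Mathlib's Fourier transform -/

lemma FT_eq (f : ℝ → ℂ) (w : ℝ) : FT f (2 * π * w) = 𝓕 f w := by
  rw [FT, Real.fourier_real_eq_integral_exp_smul]
  congr 1
  ext x
  rw [smul_eq_mul]
  congr 2
  push_cast
  ring

/-- The substitution `ξ = 2πw` absorbs the factor `1/(2π)` of `schrodU`. -/
lemma schrodU_eq (t : ℝ) (f : ℝ → ℂ) (x : ℝ) :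
    schrodU t f x = 𝓕⁻ (fun w : ℝ => chirp (4 * π ^ 2 * t) w * 𝓕 f w) x := by
  have h := Measure.integral_comp_mul_left (fun ξ : ℝ => Complex.exp (Complex.I * x * ξ) *
    (Complex.exp (Complex.I * t * ξ ^ 2) * FT f ξ)) (2 * π)
  rw [abs_of_pos (by positivity)] at h
  rw [schrodU, ← h, Real.fourierInv_eq']
  congr 1
  ext w
  rw [FT_eq, smul_eq_mul, chirp]
  congr 2
  · simp only [RCLike.inner_apply, conj_trivial]
    push_cast
    ring
  · congr 1
    push_cast
    ring

lemma fourier_coordMul (f : 𝓢(ℝ, ℂ)) (w : ℝ) :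
    𝓕 (coordMul f : ℝ → ℂ) w = Complex.I / (2 * π) * deriv (𝓕 (f : ℝ → ℂ)) w := by
  have hf' : Integrable (fun x : ℝ => x • f x) := by
    refine (coordMul f).integrable.congr (ae_of_all _ fun x => ?_)
    simp [coordMul_apply]
  rw [Real.deriv_fourier f.integrable hf']
  have h : (fun x : ℝ => (-2 * π * Complex.I * x) • f x) =
      (-2 * π * Complex.I : ℂ) • (coordMul f : ℝ → ℂ) := by
    ext x
    simp [coordMul_apply]
    ring
  have hπ : (π : ℂ) ≠ 0 := by exact_mod_cast pi_ne_zero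
  rw [h, Real.fourier_real_eq, Real.fourier_real_eq]
  simp only [Pi.smul_apply, smul_comm _ (-2 * π * Complex.I : ℂ)]
  rw [integral_smul, smul_eq_mul, ← mul_assoc]
  have : Complex.I / (2 * π) * (-2 * π * Complex.I) = 1 := by
    field_simp
    simp
  rw [this, one_mul]

/-- The conjugated position operator: `𝒰(t) x 𝒰(-t) = x - 2it ∂_x`. -/
lemma schrodU_conj_mul (t : ℝ) (ψ : 𝓢(ℝ, ℂ)) (x : ℝ) :
    schrodU t (fun y : ℝ => (y : ℂ) * schrodU (-t) ψ y) x =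
      x * ψ x - 2 * Complex.I * t * deriv ψ x := by
  set c : ℝ := 4 * π ^ 2 * t with hc
  set h : 𝓢(ℝ, ℂ) := chirpMul (-c) (𝓕 ψ) with hh
  have h1 : schrodU (-t) ψ = (𝓕⁻ h : 𝓢(ℝ, ℂ)) := by
    ext y
    rw [schrodU_eq, SchwartzMap.fourierInv_coe]
    refine congrArg (fun g : ℝ → ℂ => 𝓕⁻ g y) (funext fun w => ?_)
    rw [hh, chirpMul_apply, SchwartzMap.fourier_coe, hc, mul_neg]
  have h2 : (fun y : ℝ => (y : ℂ) * schrodU (-t) ψ y) = coordMul (𝓕⁻ h) := by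
    ext y
    rw [h1, coordMul_apply]
  set K : 𝓢(ℝ, ℂ) := coordMul ψ + (-(2 * Complex.I * t)) • SchwartzMap.derivCLM ℂ ℂ ψ with hK
  have h3 : (fun w : ℝ => chirp c w * 𝓕 (coordMul (𝓕⁻ h) : ℝ → ℂ) w) = (𝓕 K : 𝓢(ℝ, ℂ)) := by
    ext w
    have hd : 𝓕 (SchwartzMap.derivCLM ℂ ℂ ψ : ℝ → ℂ) w =
        2 * π * Complex.I * w * 𝓕 (ψ : ℝ → ℂ) w :=
      congrFun (Real.fourier_deriv ψ.integrable ψ.differentiable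
        (SchwartzMap.derivCLM ℂ ℂ ψ).integrable) w
    have hK' : (𝓕 K : 𝓢(ℝ, ℂ)) w = 𝓕 (coordMul ψ : ℝ → ℂ) w +
        (-(2 * Complex.I * t)) * 𝓕 (SchwartzMap.derivCLM ℂ ℂ ψ : ℝ → ℂ) w := by
      rw [hK, FourierTransform.fourier_add, FourierTransform.fourier_smul]
      rfl
    rw [hK', hd, fourier_coordMul, fourier_coordMul, ← SchwartzMap.fourier_coe,
      FourierTransform.fourier_fourierInv_eq, hh, deriv_chirpMul, SchwartzMap.fourier_coe]
    have hπ : (π : ℂ) ≠ 0 := by exact_mod_cast pi_ne_zero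
    have e : ∀ a b : ℂ, chirp c w * (a * (chirp (-c) w * b)) = a * b := by
      intro a b
      linear_combination a * b * chirp_mul_chirp_neg c w
    rw [e, hc]
    push_cast
    field_simp
    ring
  rw [schrodU_eq, h2, h3, ← SchwartzMap.fourierInv_coe, FourierTransform.fourierInv_fourier_eq, hK]
  simp [coordMul_apply]
  ring

/-! ### The one-dimensional Sobolev-type inequality -/

/-- `‖G‖_∞² ≤ ‖G‖₂ ‖G'‖₂`; integrating over both half-lines gains the factor `1/2` that cancels
the `2` in `(|G|²)' = 2 Re(Ḡ G')`. -/
lemma norm_sq_le_eLpNorm_mul (G : 𝓢(ℝ, ℂ)) (x : ℝ) :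
    ‖G x‖ ^ 2 ≤ (eLpNorm G 2 volume).toReal * (eLpNorm (deriv G) 2 volume).toReal := by
  set D : 𝓢(ℝ, ℂ) := SchwartzMap.derivCLM ℂ ℂ G with hD
  have hDG : deriv G = D := rfl
  set F' : ℝ → ℝ := fun y => 2 * inner ℝ (G y) (D y) with hF'
  have hder : ∀ y, HasDerivAt (fun y => ‖G y‖ ^ 2) (F' y) y := fun y => (G.hasDerivAt y).norm_sq
  have hprod : Integrable (fun y => ‖G y‖ * ‖D y‖) :=
    (G.memLp 2).norm.integrable_mul (D.memLp 2).norm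
  have hle : ∀ y, |F' y| ≤ 2 * (‖G y‖ * ‖D y‖) := by
    intro y
    rw [hF', abs_mul, abs_two]
    gcongr
    exact abs_real_inner_le_norm _ _
  have hint : Integrable F' := by
    refine (hprod.const_mul 2).mono' ?_ (ae_of_all _ hle)
    exact (continuous_const.mul (G.continuous.inner D.continuous)).aestronglyMeasurable
  have hlim : Tendsto (fun y => ‖G y‖ ^ 2) (cocompact ℝ) (𝓝 0) := by
    simpa using ((zero_at_infty G).norm.pow 2)
  have hbot := integral_Iic_of_hasDerivAt_of_tendsto' (a := x) (fun y _ => hder y)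
    hint.integrableOn (hlim.mono_left atBot_le_cocompact)
  have htop := integral_Ioi_of_hasDerivAt_of_tendsto' (a := x) (fun y _ => hder y)
    hint.integrableOn (hlim.mono_left atTop_le_cocompact)
  have hb : |∫ y in Iic x, F' y| ≤ ∫ y in Iic x, |F' y| := abs_integral_le_integral_abs
  have ht : |∫ y in Ioi x, F' y| ≤ ∫ y in Ioi x, |F' y| := abs_integral_le_integral_abs
  have hsum : (∫ y in Iic x, |F' y|) + ∫ y in Ioi x, |F' y| = ∫ y, |F' y| :=
    intervalIntegral.integral_Iic_add_Ioi hint.abs.integrableOn hint.abs.integrableOn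
  have htot : ∫ y, |F' y| ≤ 2 * ∫ y, ‖G y‖ * ‖D y‖ := by
    rw [← integral_const_mul]
    exact integral_mono hint.abs (hprod.const_mul 2) hle
  have hhold : ∫ y, ‖G y‖ * ‖D y‖ ≤ (eLpNorm G 2 volume).toReal * (eLpNorm D 2 volume).toReal := by
    have := integral_mul_norm_le_Lp_mul_Lq (μ := volume) (p := 2) (q := 2)
      Real.HolderConjugate.two_two (f := G) (g := D) (by simpa using G.memLp 2)
      (by simpa using D.memLp 2)
    rw [(G.memLp 2 volume).eLpNorm_eq_integral_rpow_norm (by simp) (by simp),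
      (D.memLp 2 volume).eLpNorm_eq_integral_rpow_norm (by simp) (by simp),
      ENNReal.toReal_ofReal (by positivity), ENNReal.toReal_ofReal (by positivity)]
    simpa using this
  rw [hDG]
  have h1 := (le_abs_self _).trans hb
  have h2 := (neg_le_abs _).trans ht
  rw [hbot] at h1
  rw [htop] at h2
  linarith

/-- For every `t > 0` and Schwartz `ψ`,
`‖ψ‖_{L^∞}² ≤ (1/(2t)) ‖ψ‖_{L²} ‖𝒰(t)(x · 𝒰(-t)ψ)‖_{L²}` (stated pointwise in `x`). -/
theorem schrodinger_weighted_bound (t : ℝ) (ht : 0 < t) (ψ : SchwartzMap ℝ ℂ) :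
    ∀ x : ℝ, ‖ψ x‖ ^ 2 ≤
      (1 / (2 * t)) * (eLpNorm (⇑ψ) 2 (volume : Measure ℝ)).toReal *
        (eLpNorm (schrodU t (fun y : ℝ => (y : ℂ) * schrodU (-t) (⇑ψ) y)) 2
          (volume : Measure ℝ)).toReal := by
  intro x
  set J := schrodU t (fun y : ℝ => (y : ℂ) * schrodU (-t) ψ y) with hJ
  set G := chirpMul (1 / (4 * t)) ψ with hG
  have hGn : ∀ y, ‖G y‖ = ‖ψ y‖ := fun y => by
    rw [hG, chirpMul_apply, norm_mul, norm_chirp, one_mul]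
  have htc : (t : ℂ) ≠ 0 := by exact_mod_cast ht.ne'
  have hDn : ∀ y, ‖deriv G y‖ = ‖((1 / (2 * t) : ℝ) • J) y‖ := by
    intro y
    have e : ((1 / (2 * t) : ℝ) • J) y = -Complex.I *
        (2 * (1 / (4 * t) : ℝ) * y * Complex.I * ψ y + deriv ψ y) := by
      rw [Pi.smul_apply, hJ, schrodU_conj_mul, Complex.real_smul]
      push_cast
      field_simp
      linear_combination (4 * y * ψ y) * Complex.I_sq
    rw [e, hG, deriv_chirpMul, norm_mul, norm_mul, norm_chirp, norm_neg, Complex.norm_I]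
  have key := norm_sq_le_eLpNorm_mul G x
  rw [hGn, eLpNorm_congr_norm_ae (ae_of_all _ hGn), eLpNorm_congr_norm_ae (ae_of_all _ hDn),
    eLpNorm_const_smul, ENNReal.toReal_mul, toReal_enorm,
    Real.norm_of_nonneg (by positivity)] at key
  linarith
end

section
/- Let φ be a Schwartz function on ℝ. Then for every x ∈ ℝ, |U(1)φ(x)|² = 2 Re ∫_ℝ Ai(x−y) · y φ(y) · [ p.v. ∫_ℝ Ai(x−z) \overline{φ(z)} / (y−z) dz ] dy, where the inner principal-value integral is p.v. ∫ f(z)/(y−z) dz = lim_{ε→0⁺} ∫_{|y−z|>ε} f(z)/(y−z) dz. -/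
/-!
Put `f y = Ai (x - y) * φ y`. Formally the right-hand side is
`2 Re ∬ y f(y) conj f(z) / (y - z)`; adding the complex conjugate with `y` and `z` exchanged replaces
the factor `y` by `y - z`, which cancels the denominator and leaves
`∬ f(y) conj f(z) = |∫ f|² = |U(1)φ(x)|²`.

The exchange is legitimate on `|y - z| > ε`, where the kernel is absolutely integrable
(`two_re_truncated`). If `f` is integrable, bounded and Lipschitz, the truncated Hilbert transforms of
`conj f` converge as `ε → 0⁺` and are bounded uniformly in `ε` and `y` (`truncHilbert_bounds`), so
dominated convergence passes to the limit when `y f(y)` is integrable (`sq_integral_eq_pv`).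

These properties of `f` come from an absolutely convergent formula for `Ai` (`Ai_eq`): two
integrations by parts against the weight `1 / (1 + ξ²)` write `Ai z` as a polynomial combination, with
powers of `1 - z` as coefficients, of oscillatory integrals that are bounded and Lipschitz in `z`. The
powers of `1 - z` are absorbed by the Schwartz function (`Ai_mul_schwartz`).
-/

open MeasureTheory Filter Real Set
open scoped ENNReal Topology

/-- The Airy function, defined by the improper integral
`Ai z = (1/π) ∫₀^∞ cos (ξ³/3 + ξ z) dξ` (as a limit of integrals over `[0, R]`). -/
noncomputable def Ai (z : ℝ) : ℝ :=
  limUnder atTop (fun R : ℝ => (1 / π) * ∫ ξ in (0:ℝ)..R, Real.cos (ξ ^ 3 / 3 + ξ * z))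

/-- The linear KdV (Airy) group: `(U t φ) x = t^{-1/3} ∫ Ai ((x-y)/t^{1/3}) φ(y) dy`. -/
noncomputable def U (t : ℝ) (φ : ℝ → ℂ) : ℝ → ℂ :=
  fun x => (t ^ (1/3 : ℝ))⁻¹ • ∫ y : ℝ, (Ai ((x - y) / t ^ (1/3 : ℝ)) : ℂ) * φ y

/-- `(U (-t) φ) x = t^{-1/3} ∫ Ai ((y-x)/t^{1/3}) φ(y) dy` for `t > 0`. -/
noncomputable def Uneg (t : ℝ) (φ : ℝ → ℂ) : ℝ → ℂ :=
  fun x => (t ^ (1/3 : ℝ))⁻¹ • ∫ y : ℝ, (Ai ((y - x) / t ^ (1/3 : ℝ)) : ℂ) * φ y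
/-- Principal value integral `p.v. ∫ f(z)/(y-z) dz = lim_{ε→0⁺} ∫_{|y-z|>ε} f(z)/(y-z) dz`. -/
noncomputable def pv (f : ℝ → ℂ) (y : ℝ) : ℂ :=
  limUnder (𝓝[>] (0:ℝ)) (fun ε => ∫ z in {z : ℝ | ε < |y - z|}, f z / ((y : ℂ) - (z : ℂ)))

/-! ### Bounded Lipschitz functions -/

/-- `f` is bounded and Lipschitz; a single constant serves for both bounds. -/
def BoundedLipschitz (f : ℝ → ℂ) : Prop :=
  ∃ C : ℝ, 0 ≤ C ∧ (∀ x, ‖f x‖ ≤ C) ∧ ∀ x y, ‖f x - f y‖ ≤ C * |x - y|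

theorem BoundedLipschitz.continuous {f : ℝ → ℂ} (hf : BoundedLipschitz f) : Continuous f := by
  obtain ⟨C, hC, -, h⟩ := hf
  refine (LipschitzWith.of_dist_le_mul (K := C.toNNReal) fun x y => ?_).continuous
  rw [dist_eq_norm, Real.dist_eq, Real.coe_toNNReal C hC]
  exact h x y

theorem BoundedLipschitz.add {f g : ℝ → ℂ} (hf : BoundedLipschitz f) (hg : BoundedLipschitz g) :
    BoundedLipschitz fun x => f x + g x := by
  obtain ⟨C, hC, hb, hl⟩ := hf
  obtain ⟨D, hD, hb', hl'⟩ := hg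
  refine ⟨C + D, by positivity, fun x => (norm_add_le _ _).trans (add_le_add (hb x) (hb' x)),
    fun x y => ?_⟩
  rw [show f x + g x - (f y + g y) = (f x - f y) + (g x - g y) by ring, add_mul]
  exact (norm_add_le _ _).trans (add_le_add (hl x y) (hl' x y))

theorem BoundedLipschitz.mul {f g : ℝ → ℂ} (hf : BoundedLipschitz f) (hg : BoundedLipschitz g) :
    BoundedLipschitz fun x => f x * g x := by
  obtain ⟨C, hC, hb, hl⟩ := hf
  obtain ⟨D, hD, hb', hl'⟩ := hg
  refine ⟨C * D + C * D, by positivity, fun x => ?_, fun x y => ?_⟩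
  · rw [norm_mul]
    have := mul_le_mul (hb x) (hb' x) (norm_nonneg _) hC
    nlinarith [mul_nonneg hC hD]
  · rw [show f x * g x - f y * g y = f x * (g x - g y) + (f x - f y) * g y by ring]
    refine (norm_add_le _ _).trans ?_
    rw [norm_mul, norm_mul]
    have h1 := mul_le_mul (hb x) (hl' x y) (norm_nonneg _) hC
    have h2 := mul_le_mul (hl x y) (hb' y) (norm_nonneg _) (mul_nonneg hC (abs_nonneg _))
    linarith

theorem BoundedLipschitz.star {f : ℝ → ℂ} (hf : BoundedLipschitz f) :
    BoundedLipschitz fun x => (starRingEnd ℂ) (f x) := by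
  obtain ⟨C, hC, hb, hl⟩ := hf
  refine ⟨C, hC, fun x => by simpa using hb x, fun x y => ?_⟩
  rw [← map_sub, RCLike.norm_conj]
  exact hl x y

/-! ### The truncated Hilbert transform -/

/-- The truncated integral `∫_{|y-z|>ε} g z / (y - z) dz` whose limit as `ε → 0⁺` is `pv g y`. -/
noncomputable def truncHilbert (g : ℝ → ℂ) (ε y : ℝ) : ℂ :=
  ∫ z in {z : ℝ | ε < |y - z|}, g z / ((y : ℂ) - (z : ℂ))

/-- Folding the half-lines `z < y` and `z > y` onto each other makes the cancellation at `z = y`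
visible: for Lipschitz `g` the integrand on the right is bounded near `u = 0`. -/
theorem truncHilbert_eq {g : ℝ → ℂ} (hg : Integrable g) {ε : ℝ} (hε : 0 < ε) (y : ℝ) :
    truncHilbert g ε y = ∫ u in Ioi ε, (g (y - u) - g (y + u)) / (u : ℂ) := by
  have hint : ∀ k : ℝ → ℂ, Integrable k →
      IntegrableOn (fun u : ℝ => k u / (u : ℂ)) {u : ℝ | ε < |u|} := by
    intro k hk
    refine Integrable.mono' (hk.norm.integrableOn.div_const ε)
      (hk.aestronglyMeasurable.aemeasurable.restrict.div
        Complex.measurable_ofReal.aemeasurable).aestronglyMeasurable ?_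
    refine (ae_restrict_iff' (measurableSet_lt measurable_const measurable_abs)).2 (ae_of_all _ ?_)
    intro u (hu : ε < |u|)
    rw [norm_div, Complex.norm_real, Real.norm_eq_abs]
    gcongr
  have hsub : Ioi ε ⊆ {u : ℝ | ε < |u|} := fun u hu => lt_of_lt_of_le hu (le_abs_self u)
  have hsub' : Iio (-ε) ⊆ {u : ℝ | ε < |u|} := fun u (hu : u < -ε) =>
    lt_of_lt_of_le (by linarith) (neg_le_abs u)
  have hset : {u : ℝ | ε < |u|} = Iio (-ε) ∪ Ioi ε := by
    ext u
    simp only [mem_ofPred_eq, lt_abs, mem_union, mem_Iio, mem_Ioi]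
    constructor <;> rintro (h | h)
    · exact Or.inr h
    · exact Or.inl (by linarith)
    · exact Or.inr (by linarith)
    · exact Or.inl h
  have h1 : truncHilbert g ε y = ∫ u in {u : ℝ | ε < |u|}, g (y - u) / (u : ℂ) := by
    unfold truncHilbert
    rw [← integral_indicator (measurableSet_lt measurable_const (by fun_prop)),
      ← integral_indicator (measurableSet_lt measurable_const measurable_abs),
      ← integral_sub_left_eq_self _ volume y]
    congr 1
    ext u
    simp [indicator]
  have hA : Integrable fun u => g (y - u) := hg.comp_sub_left y
  have hB : Integrable fun u => g (y + u) := hg.comp_add_left y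
  rw [h1, hset, setIntegral_union (by
      rw [Set.disjoint_left]
      intro u (hu : u < -ε) (hu' : ε < u)
      linarith) measurableSet_Ioi ((hint _ hA).mono_set hsub') ((hint _ hA).mono_set hsub)]
  have h2 : ∫ u in Iio (-ε), g (y - u) / (u : ℂ) = ∫ u in Ioi ε, -(g (y + u) / (u : ℂ)) := by
    rw [← integral_Iic_eq_integral_Iio, ← integral_comp_neg_Ioi]
    congr 1
    ext u
    simp [div_neg]
  rw [h2, add_comm, integral_neg, ← sub_eq_add_neg,
    ← integral_sub ((hint _ hA).mono_set hsub) ((hint _ hB).mono_set hsub)]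
  congr 1
  ext u
  ring

/-- For integrable bounded Lipschitz `g` the truncations are bounded uniformly in `ε` and `y`, and
they converge, so that `pv g y` is a true limit rather than a default value of `limUnder`. -/
theorem truncHilbert_bounds {g : ℝ → ℂ} (hg : Integrable g) (hl : BoundedLipschitz g) :
    ∃ B : ℝ, (∀ ε y : ℝ, 0 < ε → ‖truncHilbert g ε y‖ ≤ B) ∧
      ∀ y, Tendsto (fun ε => truncHilbert g ε y) (𝓝[>] 0) (𝓝 (pv g y)) := by
  have hcont := hl.continuous
  obtain ⟨C, hC, -, hl⟩ := hl
  -- A majorant of the folded integrand: the Lipschitz bound on `(0, 1]`, and `1 / u ≤ 1` beyond.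
  set b : ℝ → ℝ → ℝ := fun y u =>
    (Ioc (0:ℝ) 1).indicator (fun _ => 2 * C) u + (‖g (y - u)‖ + ‖g (y + u)‖) with hb
  have hA : ∀ y, Integrable fun u => ‖g (y - u)‖ := fun y => (hg.comp_sub_left y).norm
  have hB : ∀ y, Integrable fun u => ‖g (y + u)‖ := fun y => (hg.comp_add_left y).norm
  have hI : Integrable ((Ioc (0:ℝ) 1).indicator (fun _ => 2 * C)) :=
    (integrable_indicator_iff measurableSet_Ioc).2 (integrableOn_const (by simp))
  have hAB : ∀ y, Integrable fun u => ‖g (y - u)‖ + ‖g (y + u)‖ := fun y => (hA y).add (hB y)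
  have hbint : ∀ y, Integrable (b y) := fun y => hI.add (hAB y)
  have hb0 : ∀ y u, 0 ≤ b y u := fun y u =>
    add_nonneg (indicator_nonneg (fun _ _ => by positivity) _) (by positivity)
  have hbval : ∀ y, ∫ u, b y u = 2 * C + ((∫ u, ‖g u‖) + ∫ u, ‖g u‖) := by
    intro y
    rw [hb]
    simp only
    rw [integral_add hI (hAB y), integral_add (hA y) (hB y),
      integral_sub_left_eq_self (fun u => ‖g u‖), integral_add_left_eq_self (fun u => ‖g u‖),
      integral_indicator measurableSet_Ioc]
    simp
  have hle : ∀ y u, 0 < u → ‖(g (y - u) - g (y + u)) / (u : ℂ)‖ ≤ b y u := by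
    intro y u hu
    rw [norm_div, Complex.norm_real, Real.norm_eq_abs, abs_of_pos hu, div_le_iff₀ hu]
    by_cases h1 : u ≤ 1
    · have h2 := hl (y - u) (y + u)
      rw [show y - u - (y + u) = -(2 * u) by ring, abs_neg, abs_of_pos (by positivity)] at h2
      have : (Ioc (0:ℝ) 1).indicator (fun _ => 2 * C) u = 2 * C := indicator_of_mem (mem_Ioc.2 ⟨hu, h1⟩) _
      simp only [hb, this]
      nlinarith [mul_nonneg (norm_nonneg (g (y - u))) hu.le,
        mul_nonneg (norm_nonneg (g (y + u))) hu.le]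
    · have : (Ioc (0:ℝ) 1).indicator (fun _ => 2 * C) u = 0 :=
        indicator_of_notMem (fun h => h1 h.2) _
      simp only [hb, this, zero_add]
      have h2 := norm_sub_le (g (y - u)) (g (y + u))
      nlinarith [mul_nonneg (norm_nonneg (g (y - u))) (by linarith : 0 ≤ u - 1),
        mul_nonneg (norm_nonneg (g (y + u))) (by linarith : 0 ≤ u - 1)]
  have hmeas : ∀ y, AEStronglyMeasurable (fun u : ℝ => (g (y - u) - g (y + u)) / (u : ℂ)) := by
    intro y
    exact ((by fun_prop : Continuous fun u => g (y - u) - g (y + u)).measurable.div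
      Complex.measurable_ofReal).aestronglyMeasurable
  refine ⟨2 * C + ((∫ u, ‖g u‖) + ∫ u, ‖g u‖), fun ε y hε => ?_, fun y => ?_⟩
  · rw [truncHilbert_eq hg hε, ← hbval y]
    refine (norm_integral_le_of_norm_le (hbint y).integrableOn ?_).trans
      (setIntegral_le_integral (hbint y) (ae_of_all _ (hb0 y)))
    refine (ae_restrict_iff' measurableSet_Ioi).2 (ae_of_all _ fun u hu => hle y u ?_)
    exact hε.trans hu
  · have hlim : Tendsto (fun ε => truncHilbert g ε y) (𝓝[>] 0)
        (𝓝 (∫ u, (Ioi (0:ℝ)).indicator (fun u => (g (y - u) - g (y + u)) / (u : ℂ)) u)) := by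
      have : Tendsto (fun ε : ℝ =>
          ∫ u, (Ioi ε).indicator (fun u => (g (y - u) - g (y + u)) / (u : ℂ)) u) (𝓝[>] 0)
          (𝓝 (∫ u, (Ioi (0:ℝ)).indicator (fun u => (g (y - u) - g (y + u)) / (u : ℂ)) u)) := by
        refine tendsto_integral_filter_of_dominated_convergence (b y)
          (Eventually.of_forall fun ε => (hmeas y).indicator measurableSet_Ioi) ?_ (hbint y) ?_
        · filter_upwards [self_mem_nhdsWithin] with ε (hε : 0 < ε)
          refine ae_of_all _ fun u => ?_
          by_cases hu : u ∈ Ioi ε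
          · rw [indicator_of_mem hu]
            exact hle y u (hε.trans hu)
          · rw [indicator_of_notMem hu, norm_zero]
            exact hb0 y u
        · refine ae_of_all _ fun u => ?_
          by_cases hu : 0 < u
          · refine tendsto_const_nhds.congr' ?_
            filter_upwards [nhdsWithin_le_nhds (Iio_mem_nhds hu)] with ε (hε : ε < u)
            rw [indicator_of_mem (show u ∈ Ioi (0:ℝ) from hu),
              indicator_of_mem (show u ∈ Ioi ε from hε)]
          · refine tendsto_const_nhds.congr' ?_
            filter_upwards [self_mem_nhdsWithin] with ε (hε : 0 < ε)
            rw [indicator_of_notMem (show u ∉ Ioi (0:ℝ) from hu),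
              indicator_of_notMem (show u ∉ Ioi ε from fun h => hu (hε.trans h))]
      refine this.congr' ?_
      filter_upwards [self_mem_nhdsWithin] with ε (hε : 0 < ε)
      rw [truncHilbert_eq hg hε, integral_indicator measurableSet_Ioi]
    have : pv g y = _ := hlim.limUnder_eq
    rw [this]
    exact hlim

/-! ### Symmetrization of the double integral -/

/-- The kernel `f y * conj (f z) / (y - z)` at `p = (y, z)`, set to zero where `|y - z| ≤ ε`. -/
noncomputable def truncKernel (f : ℝ → ℂ) (ε : ℝ) (p : ℝ × ℝ) : ℂ :=
  {p : ℝ × ℝ | ε < |p.1 - p.2|}.indicator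
    (fun p => f p.1 * (starRingEnd ℂ) (f p.2) / ((p.1 : ℂ) - (p.2 : ℂ))) p

theorem measurableSet_offDiag (ε : ℝ) : MeasurableSet {p : ℝ × ℝ | ε < |p.1 - p.2|} :=
  measurableSet_lt measurable_const (by fun_prop)

theorem measurable_truncKernel {f : ℝ → ℂ} (hf : Continuous f) (ε : ℝ) :
    Measurable (truncKernel f ε) := by
  refine Measurable.indicator ?_ (measurableSet_offDiag ε)
  refine Measurable.div ?_ (by fun_prop)
  have : Continuous fun p : ℝ × ℝ => f p.1 * (starRingEnd ℂ) (f p.2) := by fun_prop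
  exact this.measurable

theorem integrable_mul_truncKernel {f : ℝ → ℂ} (hf : Integrable f) (hc : Continuous f)
    (hyf : Integrable fun y : ℝ => (y : ℂ) * f y) {ε : ℝ} (hε : 0 < ε) :
    Integrable (fun p : ℝ × ℝ => (p.1 : ℂ) * truncKernel f ε p) := by
  refine Integrable.mono' ((hyf.norm.mul_prod hf.norm).div_const ε)
    (((Complex.measurable_ofReal.comp measurable_fst).mul
      (measurable_truncKernel hc ε)).aestronglyMeasurable) (ae_of_all _ fun p => ?_)
  unfold truncKernel
  by_cases hp : p ∈ {p : ℝ × ℝ | ε < |p.1 - p.2|}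
  · rw [indicator_of_mem hp, norm_mul, norm_div, norm_mul, RCLike.norm_conj, norm_mul,
      ← Complex.ofReal_sub, Complex.norm_real (p.1 - p.2), Real.norm_eq_abs, mul_div_assoc',
      ← mul_assoc]
    have : ε ≤ |p.1 - p.2| := le_of_lt hp
    gcongr
  · rw [indicator_of_notMem hp, mul_zero, norm_zero]
    positivity

/-- The identity at level `ε`. Conjugation together with the exchange of `y` and `z` turns
`y * truncKernel` into `-z * truncKernel`, so twice the real part carries the factor `y - z`, which
cancels the denominator. -/
theorem two_re_truncated {f : ℝ → ℂ} (hf : Integrable f) (hc : Continuous f)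
    (hyf : Integrable fun y : ℝ => (y : ℂ) * f y) {ε : ℝ} (hε : 0 < ε) :
    ((2 * (∫ y : ℝ, (y : ℂ) * f y * truncHilbert (fun z => (starRingEnd ℂ) (f z)) ε y).re : ℝ) : ℂ)
      = ∫ p : ℝ × ℝ, {p : ℝ × ℝ | ε < |p.1 - p.2|}.indicator
          (fun p => f p.1 * (starRingEnd ℂ) (f p.2)) p := by
  have hK := integrable_mul_truncKernel hf hc hyf hε
  have h1 : ∫ y : ℝ, (y : ℂ) * f y * truncHilbert (fun z => (starRingEnd ℂ) (f z)) ε y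
      = ∫ p : ℝ × ℝ, (p.1 : ℂ) * truncKernel f ε p := by
    rw [Measure.volume_eq_prod, integral_prod _ hK]
    congr 1
    ext y
    unfold truncHilbert truncKernel
    rw [← integral_indicator (measurableSet_lt measurable_const (by fun_prop)),
      ← integral_const_mul]
    congr 1
    ext z
    simp only [indicator, mem_ofPred_eq]
    split_ifs <;> ring
  have hswap : ∀ p : ℝ × ℝ, (starRingEnd ℂ) (truncKernel f ε p.swap) = - truncKernel f ε p := by
    intro p
    unfold truncKernel
    simp only [indicator, mem_ofPred_eq, Prod.fst_swap, Prod.snd_swap, abs_sub_comm p.2 p.1]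
    split_ifs
    · rw [← neg_sub (p.1 : ℂ) p.2, div_neg, map_neg, map_div₀, map_mul, Complex.conj_conj, map_sub,
        Complex.conj_ofReal, Complex.conj_ofReal, mul_comm]
    · simp
  have h2 : (starRingEnd ℂ) (∫ p : ℝ × ℝ, (p.1 : ℂ) * truncKernel f ε p)
      = ∫ p : ℝ × ℝ, -((p.2 : ℂ) * truncKernel f ε p) := by
    rw [← integral_conj, Measure.volume_eq_prod, ← integral_prod_swap]
    congr 1
    ext p
    rw [map_mul, hswap, Complex.conj_ofReal, Prod.fst_swap, mul_neg]
  have hK2 : Integrable (fun p : ℝ × ℝ => -((p.2 : ℂ) * truncKernel f ε p)) := by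
    have h3 := (Complex.conjCLE.toContinuousLinearMap.integrable_comp hK).swap
    refine h3.congr (ae_of_all _ fun p => ?_)
    simp [hswap, mul_neg]
  rw [h1, ← Complex.add_conj, h2, ← integral_add hK hK2]
  congr 1
  ext p
  unfold truncKernel
  simp only [indicator, mem_ofPred_eq]
  split_ifs with hp
  · have : (p.1 : ℂ) - p.2 ≠ 0 := by
      rw [← Complex.ofReal_sub, Complex.ofReal_ne_zero, ← abs_pos]
      exact hε.trans hp
    field_simp
    ring
  · simp

/-- The identity for a general integrable bounded Lipschitz `f` with integrable first moment. -/
theorem sq_integral_eq_pv {f : ℝ → ℂ} (hf : Integrable f) (hl : BoundedLipschitz f)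
    (hyf : Integrable fun y : ℝ => (y : ℂ) * f y) :
    ‖∫ y, f y‖ ^ 2
      = 2 * (∫ y : ℝ, (y : ℂ) * f y * pv (fun z => (starRingEnd ℂ) (f z)) y).re := by
  have hc := hl.continuous
  have hg : Integrable fun z => (starRingEnd ℂ) (f z) :=
    Complex.conjCLE.toContinuousLinearMap.integrable_comp hf
  obtain ⟨B, hB, hlim⟩ := truncHilbert_bounds hg hl.star
  have hmeas : ∀ ε, AEStronglyMeasurable
      (fun y => truncHilbert (fun z => (starRingEnd ℂ) (f z)) ε y) := by
    intro ε
    have h0 : StronglyMeasurable (fun p : ℝ × ℝ => {p : ℝ × ℝ | ε < |p.1 - p.2|}.indicator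
        (fun p => (starRingEnd ℂ) (f p.2) / ((p.1 : ℂ) - (p.2 : ℂ))) p) := by
      refine Measurable.stronglyMeasurable (Measurable.indicator ?_ (measurableSet_offDiag ε))
      refine Measurable.div ?_ (by fun_prop)
      have : Continuous fun p : ℝ × ℝ => (starRingEnd ℂ) (f p.2) := by fun_prop
      exact this.measurable
    have h1 := h0.integral_prod_right' (ν := volume)
    refine h1.aestronglyMeasurable.congr (ae_of_all _ fun y => ?_)
    exact integral_indicator (f := fun z : ℝ => (starRingEnd ℂ) (f z) / ((y : ℂ) - (z : ℂ)))
      (measurableSet_lt measurable_const (by fun_prop) : MeasurableSet {z : ℝ | ε < |y - z|})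
  have hL : Tendsto (fun ε => ∫ y : ℝ, (y : ℂ) * f y *
      truncHilbert (fun z => (starRingEnd ℂ) (f z)) ε y) (𝓝[>] 0)
      (𝓝 (∫ y : ℝ, (y : ℂ) * f y * pv (fun z => (starRingEnd ℂ) (f z)) y)) := by
    refine tendsto_integral_filter_of_dominated_convergence (fun y => ‖(y : ℂ) * f y‖ * B)
      (Eventually.of_forall fun ε => hyf.aestronglyMeasurable.mul (hmeas ε)) ?_
      (hyf.norm.mul_const B) (ae_of_all _ fun y => (hlim y).const_mul _)
    filter_upwards [self_mem_nhdsWithin] with ε hε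
    refine ae_of_all _ fun y => ?_
    rw [norm_mul]
    exact mul_le_mul_of_nonneg_left (hB ε y hε) (norm_nonneg _)
  have hprod : Integrable (fun p : ℝ × ℝ => f p.1 * (starRingEnd ℂ) (f p.2)) := hf.mul_prod hg
  have hdiag : ∀ᵐ p : ℝ × ℝ, p.1 ≠ p.2 := by
    have hm : MeasurableSet {p : ℝ × ℝ | p.1 = p.2} :=
      measurableSet_eq_fun measurable_fst measurable_snd
    rw [ae_iff]
    simp only [ne_eq, not_not]
    rw [Measure.volume_eq_prod, Measure.measure_prod_null hm]
    refine ae_of_all _ fun y => ?_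
    have : Prod.mk y ⁻¹' {p : ℝ × ℝ | p.1 = p.2} = {y} := by
      ext z
      simp [eq_comm]
    simp [this]
  have hR : Tendsto (fun ε : ℝ => ∫ p : ℝ × ℝ, {p : ℝ × ℝ | ε < |p.1 - p.2|}.indicator
      (fun p => f p.1 * (starRingEnd ℂ) (f p.2)) p) (𝓝[>] 0)
      (𝓝 (∫ p : ℝ × ℝ, f p.1 * (starRingEnd ℂ) (f p.2))) := by
    refine tendsto_integral_filter_of_dominated_convergence
      (fun p => ‖f p.1 * (starRingEnd ℂ) (f p.2)‖)
      (Eventually.of_forall fun ε => hprod.aestronglyMeasurable.indicator (measurableSet_offDiag ε))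
      (Eventually.of_forall fun ε => ae_of_all _ fun p => norm_indicator_le_norm_self _ _)
      hprod.norm ?_
    filter_upwards [hdiag] with p hp
    refine tendsto_const_nhds.congr' ?_
    filter_upwards [nhdsWithin_le_nhds (Iio_mem_nhds (abs_pos.2 (sub_ne_zero.2 hp)))] with ε hε
    exact (indicator_of_mem (s := {p : ℝ × ℝ | ε < |p.1 - p.2|}) hε
      (fun p : ℝ × ℝ => f p.1 * (starRingEnd ℂ) (f p.2))).symm
  have hval : ∫ p : ℝ × ℝ, f p.1 * (starRingEnd ℂ) (f p.2) = ((‖∫ y, f y‖ ^ 2 : ℝ) : ℂ) := by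
    rw [Measure.volume_eq_prod, integral_prod_mul f (fun z => (starRingEnd ℂ) (f z)), integral_conj,
      Complex.mul_conj, Complex.normSq_eq_norm_sq]
  have hL' := (Complex.continuous_ofReal.tendsto _).comp
    (((Complex.continuous_re.tendsto _).comp hL).const_mul 2)
  have hfin := tendsto_nhds_unique (hL'.congr' (by
    filter_upwards [self_mem_nhdsWithin] with ε hε
    exact two_re_truncated hf hc hyf hε)) hR
  rw [hval] at hfin
  exact (Complex.ofReal_injective hfin).symm

/-! ### An absolutely convergent formula for the Airy function -/

/-- The oscillatory integral `∫₀^∞ T (ξ³/3 + ξ z) w ξ dξ`, used with `T = sin` or `T = cos` and an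
integrable weight `w`. -/
noncomputable def oscInt (T w : ℝ → ℝ) (z : ℝ) : ℝ :=
  ∫ ξ in Ioi (0:ℝ), T (ξ ^ 3 / 3 + ξ * z) * w ξ

theorem integrable_osc {T w : ℝ → ℝ} (hT : Continuous T) (hT1 : ∀ t, |T t| ≤ 1)
    (hw : Continuous w) (hw1 : ∀ ξ, |w ξ| ≤ 4 * (1 + ξ ^ 2)⁻¹) (z : ℝ) :
    Integrable fun ξ => T (ξ ^ 3 / 3 + ξ * z) * w ξ := by
  refine Integrable.mono' (integrable_inv_one_add_sq.const_mul 4)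
    (by fun_prop : Continuous fun ξ => T (ξ ^ 3 / 3 + ξ * z) * w ξ).aestronglyMeasurable
    (ae_of_all _ fun ξ => ?_)
  rw [Real.norm_eq_abs, abs_mul]
  calc |T (ξ ^ 3 / 3 + ξ * z)| * |w ξ| ≤ 1 * |w ξ| := by gcongr; exact hT1 _
    _ ≤ _ := by rw [one_mul]; exact hw1 ξ

/-- Decay of `ξ * w ξ` compensates the factor `ξ` lost on differentiating the phase in `z`. -/
theorem boundedLipschitz_osc {T w : ℝ → ℝ} (hT : Continuous T) (hT1 : ∀ t, |T t| ≤ 1)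
    (hTl : ∀ s t, |T s - T t| ≤ |s - t|)
    (hw : Continuous w) (hw1 : ∀ ξ, |w ξ| ≤ 4 * (1 + ξ ^ 2)⁻¹)
    (hw2 : ∀ ξ, |ξ| * |w ξ| ≤ 4 * (1 + ξ ^ 2)⁻¹) (x : ℝ) :
    BoundedLipschitz fun y => (oscInt T w (x - y) : ℂ) := by
  have hk : Integrable fun ξ : ℝ => 4 * (1 + ξ ^ 2)⁻¹ := integrable_inv_one_add_sq.const_mul 4
  have hI := fun z => integrable_osc hT hT1 hw hw1 z
  refine ⟨∫ ξ in Ioi (0:ℝ), 4 * (1 + ξ ^ 2)⁻¹, integral_nonneg fun ξ => by positivity,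
    fun y => ?_, fun y y' => ?_⟩
  · rw [Complex.norm_real]
    refine norm_integral_le_of_norm_le hk.integrableOn (ae_of_all _ fun ξ => ?_)
    rw [Real.norm_eq_abs, abs_mul]
    calc _ ≤ 1 * |w ξ| := by gcongr; exact hT1 _
      _ ≤ _ := by rw [one_mul]; exact hw1 ξ
  · rw [← Complex.ofReal_sub, Complex.norm_real]
    unfold oscInt
    rw [← integral_sub (hI _).integrableOn (hI _).integrableOn, ← integral_mul_const]
    refine norm_integral_le_of_norm_le (hk.mul_const _).integrableOn (ae_of_all _ fun ξ => ?_)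
    rw [Real.norm_eq_abs, ← sub_mul, abs_mul]
    have h1 := hTl (ξ ^ 3 / 3 + ξ * (x - y)) (ξ ^ 3 / 3 + ξ * (x - y'))
    rw [show ξ ^ 3 / 3 + ξ * (x - y) - (ξ ^ 3 / 3 + ξ * (x - y')) = - (ξ * (y - y')) by ring,
      abs_neg, abs_mul] at h1
    calc _ ≤ |ξ| * |y - y'| * |w ξ| := by gcongr
      _ = |ξ| * |w ξ| * |y - y'| := by ring
      _ ≤ _ := mul_le_mul_of_nonneg_right (hw2 ξ) (abs_nonneg _)

/-- The three weights in the formula for `Ai` decay fast enough for `boundedLipschitz_osc`. -/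
theorem weight_bounds :
    (Continuous (fun ξ : ℝ => 2 * ξ * (1 + ξ ^ 2)⁻¹ ^ 2) ∧
      (∀ ξ : ℝ, |2 * ξ * (1 + ξ ^ 2)⁻¹ ^ 2| ≤ 4 * (1 + ξ ^ 2)⁻¹) ∧
      ∀ ξ : ℝ, |ξ| * |2 * ξ * (1 + ξ ^ 2)⁻¹ ^ 2| ≤ 4 * (1 + ξ ^ 2)⁻¹) ∧
    (Continuous (fun ξ : ℝ => 4 * ξ * (1 + ξ ^ 2)⁻¹ ^ 3) ∧
      (∀ ξ : ℝ, |4 * ξ * (1 + ξ ^ 2)⁻¹ ^ 3| ≤ 4 * (1 + ξ ^ 2)⁻¹) ∧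
      ∀ ξ : ℝ, |ξ| * |4 * ξ * (1 + ξ ^ 2)⁻¹ ^ 3| ≤ 4 * (1 + ξ ^ 2)⁻¹) ∧
    (Continuous (fun ξ : ℝ => (1 + ξ ^ 2)⁻¹ ^ 2) ∧
      (∀ ξ : ℝ, |(1 + ξ ^ 2)⁻¹ ^ 2| ≤ 4 * (1 + ξ ^ 2)⁻¹) ∧
      ∀ ξ : ℝ, |ξ| * |(1 + ξ ^ 2)⁻¹ ^ 2| ≤ 4 * (1 + ξ ^ 2)⁻¹) := by
  have hk0 : ∀ ξ : ℝ, 0 < (1 + ξ ^ 2)⁻¹ := fun ξ => by positivity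
  have hk1 : ∀ ξ : ℝ, (1 + ξ ^ 2)⁻¹ ≤ 1 := fun ξ => inv_le_one_of_one_le₀ (by nlinarith [sq_nonneg ξ])
  have hk2 : ∀ ξ : ℝ, |ξ| * (1 + ξ ^ 2)⁻¹ ≤ 1 := fun ξ => by
    rw [← div_eq_mul_inv, div_le_one (by positivity), ← sq_abs]
    nlinarith [sq_nonneg (|ξ| - 1), abs_nonneg ξ]
  have hk3 : ∀ ξ : ℝ, |ξ| * |ξ| * (1 + ξ ^ 2)⁻¹ ≤ 1 := fun ξ => by
    rw [← div_eq_mul_inv, div_le_one (by positivity), abs_mul_abs_self]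
    nlinarith
  have hcont : Continuous fun ξ : ℝ => (1 + ξ ^ 2)⁻¹ :=
    (by fun_prop : Continuous fun ξ : ℝ => 1 + ξ ^ 2).inv₀ fun ξ => by positivity
  refine ⟨⟨by fun_prop,
    (fun ξ => by
      rw [abs_mul, abs_mul, abs_two, abs_of_pos (pow_pos (hk0 ξ) 2)]
      nlinarith [mul_le_mul_of_nonneg_right (hk2 ξ) (hk0 ξ).le, hk0 ξ]),
    (fun ξ => by
      rw [abs_mul, abs_mul, abs_two, abs_of_pos (pow_pos (hk0 ξ) 2)]
      nlinarith [mul_le_mul_of_nonneg_right (hk3 ξ) (hk0 ξ).le, hk0 ξ])⟩,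
    ⟨by fun_prop,
    (fun ξ => by
      rw [abs_mul, abs_mul, abs_of_pos (zero_lt_four' ℝ), abs_of_pos (pow_pos (hk0 ξ) 3)]
      have := mul_le_mul (hk2 ξ) (hk1 ξ) (hk0 ξ).le zero_le_one
      nlinarith [mul_le_mul_of_nonneg_right this (hk0 ξ).le, hk0 ξ]),
    (fun ξ => by
      rw [abs_mul, abs_mul, abs_of_pos (zero_lt_four' ℝ), abs_of_pos (pow_pos (hk0 ξ) 3)]
      have := mul_le_mul (hk3 ξ) (hk1 ξ) (hk0 ξ).le zero_le_one
      nlinarith [mul_le_mul_of_nonneg_right this (hk0 ξ).le, hk0 ξ])⟩,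
    ⟨by fun_prop,
    (fun ξ => by
      rw [abs_of_pos (pow_pos (hk0 ξ) 2)]
      nlinarith [hk0 ξ, hk1 ξ]),
    (fun ξ => by
      rw [abs_of_pos (pow_pos (hk0 ξ) 2)]
      nlinarith [mul_le_mul_of_nonneg_right (hk2 ξ) (hk0 ξ).le, hk0 ξ])⟩⟩

/-- Two integrations by parts. With `θ = ξ³/3 + ξ z`, so `θ' = ξ² + z`, and `k = 1 / (1 + ξ²)`,
writing `1 = k * θ' + (1 - z) * k` twice gives
`cos θ = (sin θ * (k + (1 - z) * k²))' + G` with `G` absolutely integrable. In particular the limit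
defining `Ai z` exists. -/
theorem Ai_eq (z : ℝ) : Ai z = 1 / π *
    (oscInt Real.sin (fun ξ => 2 * ξ * (1 + ξ ^ 2)⁻¹ ^ 2) z
      + (1 - z) * oscInt Real.sin (fun ξ => 4 * ξ * (1 + ξ ^ 2)⁻¹ ^ 3) z
      + (1 - z) ^ 2 * oscInt Real.cos (fun ξ => (1 + ξ ^ 2)⁻¹ ^ 2) z) := by
  obtain ⟨⟨c1, w1, -⟩, ⟨c2, w2, -⟩, ⟨c3, w3, -⟩⟩ := weight_bounds
  have i1 := integrable_osc Real.continuous_sin Real.abs_sin_le_one c1 w1 z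
  have i2 := integrable_osc Real.continuous_sin Real.abs_sin_le_one c2 w2 z
  have i3 := integrable_osc Real.continuous_cos Real.abs_cos_le_one c3 w3 z
  set G : ℝ → ℝ := fun ξ => Real.sin (ξ ^ 3 / 3 + ξ * z) * (2 * ξ * (1 + ξ ^ 2)⁻¹ ^ 2)
      + (1 - z) * (Real.sin (ξ ^ 3 / 3 + ξ * z) * (4 * ξ * (1 + ξ ^ 2)⁻¹ ^ 3))
      + (1 - z) ^ 2 * (Real.cos (ξ ^ 3 / 3 + ξ * z) * (1 + ξ ^ 2)⁻¹ ^ 2) with hG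
  have i12 := i1.add (i2.const_mul (1 - z))
  have hGi : Integrable G := i12.add (i3.const_mul ((1 - z) ^ 2))
  have hGval : ∫ ξ in Ioi (0:ℝ), G ξ =
      oscInt Real.sin (fun ξ => 2 * ξ * (1 + ξ ^ 2)⁻¹ ^ 2) z
      + (1 - z) * oscInt Real.sin (fun ξ => 4 * ξ * (1 + ξ ^ 2)⁻¹ ^ 3) z
      + (1 - z) ^ 2 * oscInt Real.cos (fun ξ => (1 + ξ ^ 2)⁻¹ ^ 2) z := by
    unfold oscInt
    rw [← integral_const_mul, ← integral_const_mul,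
      ← integral_add i1.integrableOn (i2.const_mul (1 - z)).integrableOn]
    exact integral_add i12.integrableOn (i3.const_mul ((1 - z) ^ 2)).integrableOn
  set F : ℝ → ℝ := fun ξ => Real.sin (ξ ^ 3 / 3 + ξ * z) *
    ((1 + ξ ^ 2)⁻¹ + (1 - z) * (1 + ξ ^ 2)⁻¹ ^ 2) with hF
  have hder : ∀ ξ, HasDerivAt F (Real.cos (ξ ^ 3 / 3 + ξ * z) - G ξ) ξ := by
    intro ξ
    have hne : 1 + ξ ^ 2 ≠ 0 := by positivity
    have hθ : HasDerivAt (fun ξ : ℝ => ξ ^ 3 / 3 + ξ * z) (ξ ^ 2 + z) ξ := by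
      have := ((hasDerivAt_pow 3 ξ).div_const 3).add ((hasDerivAt_id ξ).mul_const z)
      convert! this using 1
      norm_num
    have hk : HasDerivAt (fun ξ : ℝ => (1 + ξ ^ 2)⁻¹) (-(2 * ξ) / (1 + ξ ^ 2) ^ 2) ξ := by
      have h := ((hasDerivAt_pow 2 ξ).const_add 1).fun_inv hne
      convert! h using 1
      norm_num
    have := hθ.sin.mul (hk.add ((hk.fun_pow 2).const_mul (1 - z)))
    convert! this using 1
    simp only [hG, Pi.add_apply, Nat.cast_ofNat, Nat.reduceSub, pow_one]
    field_simp
    ring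
  have hcG : Continuous fun ξ => Real.cos (ξ ^ 3 / 3 + ξ * z) - G ξ := by
    simp only [hG]
    fun_prop
  have hcc : Continuous fun ξ => Real.cos (ξ ^ 3 / 3 + ξ * z) := by fun_prop
  have hFTC : ∀ R : ℝ, ∫ ξ in (0:ℝ)..R, Real.cos (ξ ^ 3 / 3 + ξ * z)
      = F R + ∫ ξ in (0:ℝ)..R, G ξ := by
    intro R
    have h1 := intervalIntegral.integral_eq_sub_of_hasDerivAt (fun ξ _ => hder ξ)
      (hcG.intervalIntegrable 0 R)
    rw [intervalIntegral.integral_sub (hcc.intervalIntegrable 0 R) hGi.intervalIntegrable] at h1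
    have h0 : F 0 = 0 := by simp [hF]
    linarith
  have hk : Tendsto (fun ξ : ℝ => (1 + ξ ^ 2)⁻¹) atTop (𝓝 0) :=
    tendsto_inv_atTop_zero.comp (tendsto_atTop_add_const_left _ _ (tendsto_pow_atTop two_ne_zero))
  -- The boundary term vanishes at infinity, and `F 0 = 0`.
  have hF0 : Tendsto F atTop (𝓝 0) := by
    refine bdd_le_mul_tendsto_zero' 1 (Eventually.of_forall fun ξ => Real.abs_sin_le_one _) ?_
    simpa using hk.add ((hk.pow 2).const_mul (1 - z))
  have hlim := ((hF0.add (intervalIntegral_tendsto_integral_Ioi 0 hGi.integrableOn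
    tendsto_id)).const_mul (1 / π))
  rw [zero_add, hGval] at hlim
  refine Tendsto.limUnder_eq (hlim.congr fun R => ?_)
  rw [hFTC]
  rfl

/-! ### Products of the Airy function with Schwartz functions -/

theorem SchwartzMap.boundedLipschitz (ψ : SchwartzMap ℝ ℂ) : BoundedLipschitz ψ := by
  obtain ⟨C, hC⟩ : ∃ C, ∀ x, ‖ψ x‖ ≤ C :=
    ⟨_, fun x => ψ.toBoundedContinuousFunction.norm_coe_le_norm x⟩
  obtain ⟨D, hD⟩ : ∃ C, ∀ x, ‖deriv ψ x‖ ≤ C :=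
    ⟨_, fun x => (SchwartzMap.derivCLM ℝ ℂ ψ).toBoundedContinuousFunction.norm_coe_le_norm x⟩
  refine ⟨max C D, (norm_nonneg _).trans ((hC 0).trans (le_max_left _ _)),
    fun x => (hC x).trans (le_max_left _ _), fun x y => ?_⟩
  exact convex_univ.norm_image_sub_le_of_norm_deriv_le (fun x _ => ψ.differentiableAt)
    (fun x _ => (hD x).trans (le_max_right _ _)) (mem_univ y) (mem_univ x)

/-- The polynomial factors `(1 - z) ^ j` in the formula for `Ai z` are absorbed into the Schwartz
function, leaving bounded Lipschitz oscillatory integrals. -/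
theorem Ai_mul_schwartz (ψ : SchwartzMap ℝ ℂ) (x : ℝ) :
    BoundedLipschitz (fun y => (Ai (x - y) : ℂ) * ψ y) ∧
      Integrable fun y => (Ai (x - y) : ℂ) * ψ y := by
  have key : ∀ (a : ℝ → ℂ), BoundedLipschitz a → ∀ j : ℕ,
      BoundedLipschitz (fun y => a y * ((1 / π * (1 - (x - y)) ^ j : ℝ) • ψ y)) ∧
      Integrable (fun y => a y * ((1 / π * (1 - (x - y)) ^ j : ℝ) • ψ y)) := by
    intro a ha j
    have hg : (fun y : ℝ => 1 / π * (1 - (x - y)) ^ j).HasTemperateGrowth := by fun_prop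
    have hψ := fun y => SchwartzMap.smulLeftCLM_apply_apply hg ψ y
    simp only [← hψ]
    refine ⟨ha.mul (SchwartzMap.boundedLipschitz _), ?_⟩
    obtain ⟨C, -, hC, -⟩ := id ha
    exact (SchwartzMap.integrable _).bdd_mul ha.continuous.aestronglyMeasurable (ae_of_all _ hC)
  have hsinl : ∀ s t, |Real.sin s - Real.sin t| ≤ |s - t| := fun s t => by
    simpa [Real.dist_eq] using Real.lipschitzWith_sin.dist_le_mul s t
  have hcosl : ∀ s t, |Real.cos s - Real.cos t| ≤ |s - t| := fun s t => by
    simpa [Real.dist_eq] using Real.lipschitzWith_cos.dist_le_mul s t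
  obtain ⟨⟨c1, w1, v1⟩, ⟨c2, w2, v2⟩, ⟨c3, w3, v3⟩⟩ := weight_bounds
  have b1 := boundedLipschitz_osc Real.continuous_sin Real.abs_sin_le_one hsinl c1 w1 v1 x
  have b2 := boundedLipschitz_osc Real.continuous_sin Real.abs_sin_le_one hsinl c2 w2 v2 x
  have b3 := boundedLipschitz_osc Real.continuous_cos Real.abs_cos_le_one hcosl c3 w3 v3 x
  obtain ⟨l1, i1⟩ := key _ b1 0
  obtain ⟨l2, i2⟩ := key _ b2 1
  obtain ⟨l3, i3⟩ := key _ b3 2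
  have hEq : (fun y => (Ai (x - y) : ℂ) * ψ y) = fun y =>
      (oscInt Real.sin (fun ξ => 2 * ξ * (1 + ξ ^ 2)⁻¹ ^ 2) (x - y) : ℂ) *
          ((1 / π * (1 - (x - y)) ^ 0 : ℝ) • ψ y)
        + (oscInt Real.sin (fun ξ => 4 * ξ * (1 + ξ ^ 2)⁻¹ ^ 3) (x - y) : ℂ) *
          ((1 / π * (1 - (x - y)) ^ 1 : ℝ) • ψ y)
        + (oscInt Real.cos (fun ξ => (1 + ξ ^ 2)⁻¹ ^ 2) (x - y) : ℂ) *
          ((1 / π * (1 - (x - y)) ^ 2 : ℝ) • ψ y) := by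
    ext y
    rw [Ai_eq]
    simp only [Complex.real_smul]
    push_cast
    ring
  rw [hEq]
  exact ⟨(l1.add l2).add l3, (i1.add i2).add i3⟩

/-- For Schwartz `φ` and every `x`,
`|U(1)φ(x)|² = 2 Re ∫ Ai(x-y) yφ(y) [p.v. ∫ Ai(x-z) conj(φ(z))/(y-z) dz] dy`. -/
theorem kdv_square_identity (φ : SchwartzMap ℝ ℂ) (x : ℝ) :
    ‖U 1 (⇑φ) x‖ ^ 2 =
      2 * (∫ y : ℝ, (Ai (x - y) : ℂ) * ((y : ℂ) * φ y) *
        pv (fun z : ℝ => (Ai (x - z) : ℂ) * (starRingEnd ℂ) (φ z)) y).re := by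
  obtain ⟨hl, hi⟩ := Ai_mul_schwartz φ x
  have hy : Integrable fun y : ℝ => (y : ℂ) * ((Ai (x - y) : ℂ) * φ y) := by
    have hg : (fun y : ℝ => y).HasTemperateGrowth := by fun_prop
    refine (Ai_mul_schwartz (SchwartzMap.smulLeftCLM ℂ (fun y : ℝ => y) φ) x).2.congr
      (ae_of_all _ fun y => ?_)
    simp only [SchwartzMap.smulLeftCLM_apply_apply hg, Complex.real_smul]
    ring
  have h := sq_integral_eq_pv hi hl hy
  simp only [map_mul, Complex.conj_ofReal] at h
  have hU : U 1 (⇑φ) x = ∫ y, (Ai (x - y) : ℂ) * φ y := by simp [U]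
  rw [hU, h]
  congr 3
  ext y
  ring
end

section
/- For every λ > 0, the function ψ(y) = 1/(1 + (y/λ)²) attains equality in the Cauchy–Schwarz inequality |∫_ℝ y ψ(y) (Hψ)(y) dy| ≤ ‖yψ(y)‖_{L²} ‖ψ‖_{L²}; that is, ∫_ℝ y ψ(y) (Hψ)(y) dy = ‖yψ(y)‖_{L²} ‖ψ‖_{L²}. -/
/-!
Write `ψ(z) = 1 / (1 + (z/λ)²) = λ² / (λ² + z²)`. The Hilbert transform of `ψ` is
`(Hψ)(y) = (y/λ) ψ(y)`: by partial fractions,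
`ψ(z)/(y - z) = λ²/(λ² + y²) * (1/(y - z) + (y + z)/(λ² + z²))`, which has the primitive
`hilbertPrim` below. The primitive tends to `± λ²/(λ² + y²) * (y/λ) * (π/2)` at `±∞`
(`tendsto_logPart` shows that the logarithms cancel there), and its values at `y - ε` and `y + ε`
share the singular term `log ε`, so their difference vanishes as `ε → 0`.

Hence `y ψ Hψ = (yψ)²/λ`. Moreover `‖yψ‖² = λ² ‖ψ‖²`, because `ψ² - (yψ)²/λ²` is the derivative of
`y ψ(y)`, which vanishes at `±∞`. Both sides of the claim are therefore equal to `λ ‖ψ‖²`.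
-/

open MeasureTheory Filter Real Set
open scoped ENNReal Topology

/-- The (real) Hilbert transform, defined pointwise by the principal value integral
`(Hf)(y) = (1/π) lim_{ε→0⁺} ∫_{|y-z|>ε} f(z)/(y-z) dz`. -/
noncomputable def hilbertT (f : ℝ → ℝ) (y : ℝ) : ℝ :=
  (1 / π) * limUnder (𝓝[>] (0:ℝ))
    (fun ε => ∫ z in {z : ℝ | ε < |y - z|}, f z / (y - z))

section Cauchy

variable {lam : ℝ}

lemma one_add_div_sq_pos (z : ℝ) : 0 < 1 + (z / lam) ^ 2 := by positivity

lemma integrable_psi (hlam : 0 < lam) : Integrable (fun z : ℝ => 1 / (1 + (z / lam) ^ 2)) := by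
  simpa [one_div] using integrable_inv_one_add_sq.comp_div hlam.ne'

lemma continuous_psi : Continuous (fun z : ℝ => 1 / (1 + (z / lam) ^ 2)) := by
  refine continuous_const.div (by fun_prop) fun z => (one_add_div_sq_pos z).ne'

lemma integrableOn_kernel (hlam : 0 < lam) (y : ℝ) {ε : ℝ} (hε : 0 < ε) :
    IntegrableOn (fun z : ℝ => 1 / (1 + (z / lam) ^ 2) / (y - z)) {z : ℝ | ε < |y - z|} := by
  have hS : MeasurableSet {z : ℝ | ε < |y - z|} :=
    measurableSet_lt measurable_const (by fun_prop)
  refine Integrable.mono' ((integrable_psi hlam).div_const ε).integrableOn ?_ ?_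
  · exact (Measurable.div continuous_psi.measurable (by fun_prop)).aestronglyMeasurable
  · refine (ae_restrict_iff' hS).2 (Eventually.of_forall fun z hz => ?_)
    have hz' : ε < |y - z| := hz
    have h := one_add_div_sq_pos (lam := lam) z
    rw [norm_div, Real.norm_eq_abs, Real.norm_eq_abs, abs_of_pos (one_div_pos.2 h)]
    gcongr

/-- A primitive of `z ↦ ψ(z) / (y - z)` on each of the half-lines `z < y` and `z > y`;
`Real.log (z - y)` stands for `log |z - y|`. -/
noncomputable def hilbertPrim (lam y z : ℝ) : ℝ :=
  lam ^ 2 / (lam ^ 2 + y ^ 2) *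
    (y / lam * arctan (z / lam) + (1 / 2 * log (lam ^ 2 + z ^ 2) - log (z - y)))

lemma hasDerivAt_hilbertPrim (hlam : 0 < lam) {y z : ℝ} (hz : z ≠ y) :
    HasDerivAt (hilbertPrim lam y) (1 / (1 + (z / lam) ^ 2) / (y - z)) z := by
  have h1 : z - y ≠ 0 := sub_ne_zero.2 hz
  have h2 : y - z ≠ 0 := sub_ne_zero.2 hz.symm
  have h3 : lam ^ 2 + z ^ 2 ≠ 0 := by positivity
  have h4 : lam ^ 2 + y ^ 2 ≠ 0 := by positivity
  have h5 : 1 + (z / lam) ^ 2 ≠ 0 := (one_add_div_sq_pos z).ne'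
  have d1 : HasDerivAt (fun z : ℝ => arctan (z / lam)) _ z :=
    ((hasDerivAt_id z).div_const lam).arctan
  have d2 : HasDerivAt (fun z : ℝ => log (lam ^ 2 + z ^ 2)) _ z :=
    (((hasDerivAt_id z).pow 2).const_add (lam ^ 2)).log h3
  have d3 : HasDerivAt (fun z : ℝ => log (z - y)) _ z :=
    ((hasDerivAt_id z).sub_const y).log h1
  refine (((d1.const_mul (y / lam)).add ((d2.const_mul (1 / 2)).sub d3)).const_mul
    (lam ^ 2 / (lam ^ 2 + y ^ 2))).congr_deriv ?_
  have e : 1 / (1 + (z / lam) ^ 2) = lam ^ 2 / (lam ^ 2 + z ^ 2) := by field_simp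
  have e' : 1 / (z - y) = - (1 / (y - z)) := by
    rw [← neg_sub y z, div_neg]
  simp only [id, Pi.pow_apply, e, e']
  field_simp
  push_cast
  ring

/-- The logarithmic part of the primitive vanishes at infinity, since
`(λ² + z²)/(z - y)² = 1 + 2y/(z - y) + (λ² + y²)/(z - y)²`. -/
lemma tendsto_logPart (hlam : 0 < lam) (y : ℝ) {l : Filter ℝ}
    (hl : Tendsto (fun z : ℝ => (z - y)⁻¹) l (𝓝 0)) (hne : ∀ᶠ z in l, z ≠ y) :
    Tendsto (fun z => 1 / 2 * log (lam ^ 2 + z ^ 2) - log (z - y)) l (𝓝 0) := by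
  have h1 : Tendsto (fun z : ℝ =>
      1 + 2 * y * (z - y)⁻¹ + (lam ^ 2 + y ^ 2) * (z - y)⁻¹ ^ 2) l (𝓝 1) := by
    simpa using ((hl.const_mul (2 * y)).const_add 1).add ((hl.pow 2).const_mul (lam ^ 2 + y ^ 2))
  have h2 := (h1.log one_ne_zero).const_mul (1 / 2)
  rw [log_one, mul_zero] at h2
  refine h2.congr' ?_
  filter_upwards [hne] with z hz
  have h3 : z - y ≠ 0 := sub_ne_zero.2 hz
  have h4 : lam ^ 2 + z ^ 2 ≠ 0 := by positivity
  have e : 1 + 2 * y * (z - y)⁻¹ + (lam ^ 2 + y ^ 2) * (z - y)⁻¹ ^ 2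
      = (lam ^ 2 + z ^ 2) / (z - y) ^ 2 := by
    field_simp
    ring
  rw [e, log_div h4 (pow_ne_zero 2 h3), log_pow]
  push_cast
  ring

lemma tendsto_hilbertPrim_atTop (hlam : 0 < lam) (y : ℝ) :
    Tendsto (hilbertPrim lam y) atTop
      (𝓝 (lam ^ 2 / (lam ^ 2 + y ^ 2) * (y / lam * (π / 2)))) := by
  have h1 : Tendsto (fun z : ℝ => arctan (z / lam)) atTop (𝓝 (π / 2)) :=
    (tendsto_nhds_of_tendsto_nhdsWithin tendsto_arctan_atTop).comp
      (tendsto_id.atTop_div_const hlam)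
  have h2 := tendsto_logPart hlam y
    (tendsto_inv_atTop_zero.comp (tendsto_atTop_add_const_right _ (-y) tendsto_id))
    (eventually_ne_atTop y)
  have h3 := ((h1.const_mul (y / lam)).add h2).const_mul (lam ^ 2 / (lam ^ 2 + y ^ 2))
  rw [add_zero] at h3
  exact h3

lemma tendsto_hilbertPrim_atBot (hlam : 0 < lam) (y : ℝ) :
    Tendsto (hilbertPrim lam y) atBot
      (𝓝 (lam ^ 2 / (lam ^ 2 + y ^ 2) * (y / lam * (-(π / 2))))) := by
  have h1 : Tendsto (fun z : ℝ => arctan (z / lam)) atBot (𝓝 (-(π / 2))) :=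
    (tendsto_nhds_of_tendsto_nhdsWithin tendsto_arctan_atBot).comp
      (tendsto_id.atBot_div_const hlam)
  have h2 := tendsto_logPart hlam y
    (tendsto_inv_atBot_zero.comp (tendsto_atBot_add_const_right _ (-y) tendsto_id))
    (eventually_ne_atBot y)
  have h3 := ((h1.const_mul (y / lam)).add h2).const_mul (lam ^ 2 / (lam ^ 2 + y ^ 2))
  rw [add_zero] at h3
  exact h3

lemma truncated_integral (hlam : 0 < lam) (y : ℝ) {ε : ℝ} (hε : 0 < ε) :
    ∫ z in {z : ℝ | ε < |y - z|}, 1 / (1 + (z / lam) ^ 2) / (y - z) =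
      lam ^ 2 / (lam ^ 2 + y ^ 2) * (y / lam * π) +
        (hilbertPrim lam y (y - ε) - hilbertPrim lam y (y + ε)) := by
  have hset : {z : ℝ | ε < |y - z|} = Iio (y - ε) ∪ Ioi (y + ε) := by
    ext z
    simp only [mem_ofPred_eq, lt_abs, mem_union, mem_Iio, mem_Ioi]
    constructor <;> rintro (h | h) <;> first | (left; linarith) | (right; linarith)
  have hint := integrableOn_kernel hlam y hε
  rw [hset] at hint ⊢
  have hR := hint.right_of_union
  have hL := hint.left_of_union
  rw [setIntegral_union (Set.disjoint_left.2 fun z h1 h2 => by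
    simp only [mem_Iio, mem_Ioi] at h1 h2; linarith) measurableSet_Ioi hL hR,
    ← integral_Iic_eq_integral_Iio,
    integral_Iic_of_hasDerivAt_of_tendsto' (f := hilbertPrim lam y)
      (fun z hz => hasDerivAt_hilbertPrim hlam (by simp only [mem_Iic] at hz; linarith))
      ((integrableOn_Iic_iff_integrableOn_Iio (by simp)).2 hL) (tendsto_hilbertPrim_atBot hlam y),
    integral_Ioi_of_hasDerivAt_of_tendsto' (f := hilbertPrim lam y)
      (fun z hz => hasDerivAt_hilbertPrim hlam (by simp only [mem_Ici] at hz; linarith))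
      hR (tendsto_hilbertPrim_atTop hlam y)]
  ring

/-- The `log ε` singularities on the two sides of `y` cancel; this is where the symmetry of the
principal value enters. -/
lemma tendsto_hilbertPrim_sub (hlam : 0 < lam) (y : ℝ) :
    Tendsto (fun ε => hilbertPrim lam y (y - ε) - hilbertPrim lam y (y + ε)) (𝓝[>] 0) (𝓝 0) := by
  have hc : Continuous fun ε : ℝ => lam ^ 2 / (lam ^ 2 + y ^ 2) *
      (y / lam * (arctan ((y - ε) / lam) - arctan ((y + ε) / lam)) +
        1 / 2 * (log (lam ^ 2 + (y - ε) ^ 2) - log (lam ^ 2 + (y + ε) ^ 2))) := by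
    have h1 : Continuous fun ε : ℝ => log (lam ^ 2 + (y - ε) ^ 2) :=
      Continuous.log (by fun_prop) fun ε => by positivity
    have h2 : Continuous fun ε : ℝ => log (lam ^ 2 + (y + ε) ^ 2) :=
      Continuous.log (by fun_prop) fun ε => by positivity
    have h3 : Continuous fun ε : ℝ => arctan ((y - ε) / lam) :=
      continuous_arctan.comp (by fun_prop)
    have h4 : Continuous fun ε : ℝ => arctan ((y + ε) / lam) :=
      continuous_arctan.comp (by fun_prop)
    fun_prop
  have h := (hc.tendsto 0).mono_left (nhdsWithin_le_nhds (s := Ioi 0))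
  simp only [sub_zero, add_zero, sub_self, mul_zero] at h
  refine h.congr fun ε => ?_
  have e1 : y - ε - y = -ε := by ring
  have e2 : y + ε - y = ε := by ring
  simp only [hilbertPrim, e1, e2, log_neg_eq_log]
  ring

lemma hilbertT_psi (hlam : 0 < lam) (y : ℝ) :
    hilbertT (fun z : ℝ => 1 / (1 + (z / lam) ^ 2)) y = y / lam * (1 / (1 + (y / lam) ^ 2)) := by
  have h : Tendsto (fun ε => ∫ z in {z : ℝ | ε < |y - z|}, 1 / (1 + (z / lam) ^ 2) / (y - z))
      (𝓝[>] 0) (𝓝 (lam ^ 2 / (lam ^ 2 + y ^ 2) * (y / lam * π))) := by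
    have h0 := (tendsto_hilbertPrim_sub hlam y).const_add
      (lam ^ 2 / (lam ^ 2 + y ^ 2) * (y / lam * π))
    rw [add_zero] at h0
    refine h0.congr' ?_
    filter_upwards [self_mem_nhdsWithin] with ε hε
    exact (truncated_integral hlam y hε).symm
  rw [hilbertT, h.limUnder_eq]
  have := pi_ne_zero
  have e : 1 / (1 + (y / lam) ^ 2) = lam ^ 2 / (lam ^ 2 + y ^ 2) := by field_simp
  rw [e]
  field_simp

lemma integrable_psi_sq (hlam : 0 < lam) :
    Integrable (fun y : ℝ => (1 / (1 + (y / lam) ^ 2)) ^ 2) := by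
  refine Integrable.mono' (integrable_psi hlam)
    (continuous_psi.pow 2).aestronglyMeasurable (Eventually.of_forall fun y => ?_)
  have h := one_add_div_sq_pos (lam := lam) y
  have h1 : 1 / (1 + (y / lam) ^ 2) ≤ 1 := by
    rw [div_le_one h]; nlinarith [sq_nonneg (y / lam)]
  have h0 : 0 < 1 / (1 + (y / lam) ^ 2) := one_div_pos.2 h
  rw [Real.norm_eq_abs, abs_of_pos (by positivity)]
  nlinarith

lemma mul_psi_sq_eq (hlam : 0 < lam) (y : ℝ) :
    (y * (1 / (1 + (y / lam) ^ 2))) ^ 2 =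
      lam ^ 2 * (1 / (1 + (y / lam) ^ 2) - (1 / (1 + (y / lam) ^ 2)) ^ 2) := by
  have h := (one_add_div_sq_pos (lam := lam) y).ne'
  field_simp
  ring

lemma tendsto_mul_psi (hlam : 0 < lam) {l : Filter ℝ} (hl : Tendsto (fun z : ℝ => z⁻¹) l (𝓝 0))
    (hne : ∀ᶠ z in l, z ≠ 0) : Tendsto (fun y : ℝ => y * (1 / (1 + (y / lam) ^ 2))) l (𝓝 0) := by
  have h : Tendsto (fun z : ℝ => z⁻¹ / (z⁻¹ ^ 2 + 1 / lam ^ 2)) l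
      (𝓝 (0 / (0 ^ 2 + 1 / lam ^ 2))) :=
    hl.div ((hl.pow 2).add_const _) (by positivity)
  rw [zero_div] at h
  refine h.congr' ?_
  filter_upwards [hne] with z hz
  field_simp

/-- `‖yψ‖² = λ² ‖ψ‖²`, as `ψ² - (yψ)²/λ²` is the derivative of `yψ`. -/
lemma integral_mul_psi_sq (hlam : 0 < lam) :
    ∫ y : ℝ, (y * (1 / (1 + (y / lam) ^ 2))) ^ 2 =
      lam ^ 2 * ∫ y : ℝ, (1 / (1 + (y / lam) ^ 2)) ^ 2 := by
  have i1 := integrable_psi_sq hlam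
  have i2 : Integrable (fun y : ℝ => (y * (1 / (1 + (y / lam) ^ 2))) ^ 2) := by
    simp_rw [mul_psi_sq_eq hlam]
    exact ((integrable_psi hlam).sub i1).const_mul _
  have hd : ∀ y : ℝ, HasDerivAt (fun y : ℝ => y * (1 / (1 + (y / lam) ^ 2)))
      ((1 / (1 + (y / lam) ^ 2)) ^ 2 - (y * (1 / (1 + (y / lam) ^ 2))) ^ 2 / lam ^ 2) y := by
    intro y
    have h := (one_add_div_sq_pos (lam := lam) y).ne'
    have d : HasDerivAt (fun y : ℝ => 1 + (y / lam) ^ 2) _ y :=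
      (((hasDerivAt_id y).div_const lam).pow 2).const_add 1
    refine ((hasDerivAt_id y).mul ((hasDerivAt_const y (1 : ℝ)).div d h)).congr_deriv ?_
    simp only [id, Pi.div_apply, Nat.add_one_sub_one, pow_one, Nat.cast_ofNat]
    field_simp
    ring
  have key := integral_of_hasDerivAt_of_tendsto hd (i1.sub (i2.div_const _))
    (tendsto_mul_psi hlam tendsto_inv_atBot_zero (eventually_ne_atBot 0))
    (tendsto_mul_psi hlam tendsto_inv_atTop_zero (eventually_ne_atTop 0))
  rw [integral_sub i1 (i2.div_const _), integral_div, sub_self, sub_eq_zero] at key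
  rw [key, mul_div_cancel₀ _ (pow_ne_zero 2 hlam.ne')]

end Cauchy

/-- For every `λ > 0`, `ψ(y) = 1/(1+(y/λ)²)` attains equality in the Cauchy–Schwarz
inequality: `∫ y ψ(y) (Hψ)(y) dy = ‖yψ‖_{L²} ‖ψ‖_{L²}`. -/
theorem hilbert_cauchy_schwarz_equality (lam : ℝ) (hlam : 0 < lam) :
    (∫ y : ℝ, y * (1 / (1 + (y / lam) ^ 2)) *
        hilbertT (fun z : ℝ => 1 / (1 + (z / lam) ^ 2)) y) =
      Real.sqrt (∫ y : ℝ, (y * (1 / (1 + (y / lam) ^ 2))) ^ 2) *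
        Real.sqrt (∫ y : ℝ, (1 / (1 + (y / lam) ^ 2)) ^ 2) := by
  have hL : ∀ y : ℝ, y * (1 / (1 + (y / lam) ^ 2)) *
      hilbertT (fun z : ℝ => 1 / (1 + (z / lam) ^ 2)) y =
        (y * (1 / (1 + (y / lam) ^ 2))) ^ 2 / lam := by
    intro y
    rw [hilbertT_psi hlam]
    ring
  have h0 : 0 ≤ ∫ y : ℝ, (1 / (1 + (y / lam) ^ 2)) ^ 2 :=
    integral_nonneg fun y => sq_nonneg _
  simp_rw [hL]
  rw [integral_div, integral_mul_psi_sq hlam, Real.sqrt_mul (sq_nonneg lam),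
    Real.sqrt_sq hlam.le, mul_assoc, Real.mul_self_sqrt h0]
  field_simp
end

section
/- There is a constant C > 0 such that for every real x, |Ai(x)| ≤ C (1+|x|)^{−1/4}. -/
/-!
The bound follows from the van der Corput method applied to the phase `φ(ξ) = ξ³/3 + ξ z`, with
`φ'(ξ) = ξ² + z` and `φ''(ξ) = 2 ξ ≥ 0` on `ξ ≥ 0`.

`airy_first_derivative_test`: if `|φ'| ≥ l > 0` on `[a, b] ⊆ [0, ∞)`, one integration by parts
gives `|∫_a^b cos φ| ≤ 4 / l`. Since `φ' → ∞`, this makes the truncated integrals Cauchy, so the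
limit defining `Ai` exists (`airy_limit_exists`), and it suffices to bound the truncated integrals
for large `R` (`airy_truncated_bound`). For `z ≥ 1` the derivative is at least `z` everywhere; for
`|z| ≤ 1` it is at least `3` beyond `ξ = 2`. For `z = -t⁴` with `t ≥ 1` the stationary point is
`ξ = t²`: its neighbourhood of radius `1/t` contributes at most `2/t`, and outside it
`|φ'| = |ξ - t²| (ξ + t²) ≥ t`, so that each of the two remaining pieces contributes at most `4/t`.
-/

open MeasureTheory Filter Real Set
open scoped ENNReal Topology

lemma airy_phase_continuous (z : ℝ) :
    Continuous fun ξ : ℝ => Real.cos (ξ ^ 3 / 3 + ξ * z) := by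
  fun_prop

/-- First derivative test for the Airy phase. The sign of `φ'` need not be specified: `φ'' ≥ 0`
makes `∫ |φ''| / φ'²` telescope to `1 / φ'(a) - 1 / φ'(b)` in all cases. -/
lemma airy_first_derivative_test (z a b l : ℝ) (ha : 0 ≤ a) (hab : a ≤ b) (hl : 0 < l)
    (h : ∀ ξ ∈ Icc a b, l ≤ |ξ ^ 2 + z|) :
    |∫ ξ in a..b, Real.cos (ξ ^ 3 / 3 + ξ * z)| ≤ 4 / l := by
  have hne : ∀ ξ ∈ uIcc a b, ξ ^ 2 + z ≠ 0 := by
    intro ξ hξ h0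
    rw [uIcc_of_le hab] at hξ
    have := h ξ hξ
    rw [h0, abs_zero] at this
    linarith
  have hinv : ∀ ξ ∈ Icc a b, |(ξ ^ 2 + z)⁻¹| ≤ 1 / l := by
    intro ξ hξ
    rw [abs_inv, ← one_div]
    exact one_div_le_one_div_of_le hl (h ξ hξ)
  have hq : ContinuousOn (fun ξ : ℝ => 2 * ξ / (ξ ^ 2 + z) ^ 2) (uIcc a b) :=
    ContinuousOn.div (by fun_prop) (by fun_prop) fun ξ hξ => pow_ne_zero 2 (hne ξ hξ)
  have hsin : Continuous fun ξ : ℝ => Real.sin (ξ ^ 3 / 3 + ξ * z) := by fun_prop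
  have hint1 : IntervalIntegrable (fun ξ : ℝ => Real.cos (ξ ^ 3 / 3 + ξ * z)) volume a b :=
    (airy_phase_continuous z).intervalIntegrable a b
  have hint2 : IntervalIntegrable
      (fun ξ : ℝ => Real.sin (ξ ^ 3 / 3 + ξ * z) * (2 * ξ / (ξ ^ 2 + z) ^ 2)) volume a b :=
    (hsin.continuousOn.mul hq).intervalIntegrable
  have hint3 : IntervalIntegrable (fun ξ : ℝ => 2 * ξ / (ξ ^ 2 + z) ^ 2) volume a b :=
    hq.intervalIntegrable
  have hd : ∀ ξ : ℝ, HasDerivAt (fun ξ : ℝ => ξ ^ 2 + z) (2 * ξ) ξ := by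
    intro ξ
    simpa using (hasDerivAt_pow 2 ξ).add_const z
  have hφ : ∀ ξ : ℝ, HasDerivAt (fun ξ : ℝ => ξ ^ 3 / 3 + ξ * z) (ξ ^ 2 + z) ξ := by
    intro ξ
    refine (((hasDerivAt_pow 3 ξ).div_const 3).add
      ((hasDerivAt_id ξ).mul_const z)).congr_deriv ?_
    push_cast
    ring
  have e1 : ∫ ξ in a..b, (Real.cos (ξ ^ 3 / 3 + ξ * z)
        - Real.sin (ξ ^ 3 / 3 + ξ * z) * (2 * ξ / (ξ ^ 2 + z) ^ 2))
      = Real.sin (b ^ 3 / 3 + b * z) * (b ^ 2 + z)⁻¹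
        - Real.sin (a ^ 3 / 3 + a * z) * (a ^ 2 + z)⁻¹ := by
    refine intervalIntegral.integral_eq_sub_of_hasDerivAt
      (f := fun ξ : ℝ => Real.sin (ξ ^ 3 / 3 + ξ * z) * (ξ ^ 2 + z)⁻¹) ?_ (hint1.sub hint2)
    intro ξ hξ
    have h0 := hne ξ hξ
    refine ((hφ ξ).sin.mul ((hd ξ).inv h0)).congr_deriv ?_
    simp only [Pi.inv_apply]
    field_simp
    ring
  have e2 : ∫ ξ in a..b, 2 * ξ / (ξ ^ 2 + z) ^ 2 = -(b ^ 2 + z)⁻¹ - -(a ^ 2 + z)⁻¹ := by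
    refine intervalIntegral.integral_eq_sub_of_hasDerivAt
      (f := fun ξ : ℝ => -(ξ ^ 2 + z)⁻¹) ?_ hint3
    intro ξ hξ
    refine ((hd ξ).inv (hne ξ hξ)).neg.congr_deriv ?_
    ring
  have e3 : |∫ ξ in a..b, Real.sin (ξ ^ 3 / 3 + ξ * z) * (2 * ξ / (ξ ^ 2 + z) ^ 2)|
      ≤ ∫ ξ in a..b, 2 * ξ / (ξ ^ 2 + z) ^ 2 := by
    rw [← Real.norm_eq_abs]
    refine intervalIntegral.norm_integral_le_of_norm_le hab ?_ hint3
    refine Eventually.of_forall fun ξ hξ => ?_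
    have hξ0 : 0 ≤ ξ := ha.trans hξ.1.le
    have hpos : 0 ≤ 2 * ξ / (ξ ^ 2 + z) ^ 2 := by positivity
    rw [Real.norm_eq_abs, abs_mul, abs_of_nonneg hpos]
    exact mul_le_of_le_one_left hpos (Real.abs_sin_le_one _)
  rw [intervalIntegral.integral_sub hint1 hint2] at e1
  rw [e2] at e3
  have hb' := hinv b ⟨hab, le_rfl⟩
  have ha' := hinv a ⟨le_rfl, hab⟩
  have hsb : |Real.sin (b ^ 3 / 3 + b * z) * (b ^ 2 + z)⁻¹| ≤ 1 / l := by
    rw [abs_mul]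
    exact (mul_le_of_le_one_left (abs_nonneg _) (Real.abs_sin_le_one _)).trans hb'
  have hsa : |Real.sin (a ^ 3 / 3 + a * z) * (a ^ 2 + z)⁻¹| ≤ 1 / l := by
    rw [abs_mul]
    exact (mul_le_of_le_one_left (abs_nonneg _) (Real.abs_sin_le_one _)).trans ha'
  have h4 : 4 / l = 4 * (1 / l) := by ring
  rw [h4]
  rw [abs_le] at *
  constructor <;> linarith [e3.1, e3.2]

lemma airy_limit_exists (z : ℝ) :
    ∃ L : ℝ, Tendsto (fun R : ℝ => ∫ ξ in (0:ℝ)..R, Real.cos (ξ ^ 3 / 3 + ξ * z))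
      atTop (𝓝 L) := by
  apply cauchySeq_tendsto_of_complete
  rw [Metric.cauchySeq_iff']
  intro ε hε
  have h8 : 0 < 8 / ε := by positivity
  have hz := abs_nonneg z
  refine ⟨1 + |z| + 8 / ε, fun R hR => ?_⟩
  rw [Real.dist_eq, intervalIntegral.integral_interval_sub_left
    ((airy_phase_continuous z).intervalIntegrable _ _)
    ((airy_phase_continuous z).intervalIntegrable _ _)]
  have := airy_first_derivative_test z (1 + |z| + 8 / ε) R (8 / ε) (by positivity) hR h8 ?_
  · have h2 : 4 / (8 / ε) = ε / 2 := by field_simp; norm_num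
    linarith
  · intro ξ hξ
    refine le_trans ?_ (le_abs_self _)
    have := hξ.1
    nlinarith [neg_abs_le z]

/-- A bound on the truncated integrals, uniform in `R` beyond a threshold depending on `z`. Here
`w` plays the role of `(1 + |z|)^{1/4}`. -/
lemma airy_truncated_bound (z w : ℝ) (hw : 1 ≤ w) (hwz : w ^ 4 = 1 + |z|) (R : ℝ)
    (hR : 2 + 2 * |z| ≤ R) :
    |∫ ξ in (0:ℝ)..R, Real.cos (ξ ^ 3 / 3 + ξ * z)| ≤ 20 / w := by
  have hi : ∀ a b : ℝ, IntervalIntegrable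
      (fun ξ : ℝ => Real.cos (ξ ^ 3 / 3 + ξ * z)) volume a b :=
    fun a b => (airy_phase_continuous z).intervalIntegrable a b
  have htriv : ∀ a b : ℝ, a ≤ b →
      |∫ ξ in a..b, Real.cos (ξ ^ 3 / 3 + ξ * z)| ≤ b - a := by
    intro a b hab
    have := intervalIntegral.norm_integral_le_of_norm_le_const (a := a) (b := b) (C := 1)
      (f := fun ξ : ℝ => Real.cos (ξ ^ 3 / 3 + ξ * z)) fun ξ _ => Real.abs_cos_le_one _
    rwa [one_mul, abs_of_nonneg (sub_nonneg.2 hab)] at this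
  have hw0 : 0 < w := by linarith
  have hz0 := abs_nonneg z
  have hR0 : 0 ≤ R := by linarith
  rcases le_total 1 z with h1 | h1
  · have h := airy_first_derivative_test z 0 R z le_rfl hR0 (by linarith) fun ξ _ =>
      le_trans (by nlinarith [sq_nonneg ξ]) (le_abs_self _)
    refine h.trans ?_
    rw [abs_of_nonneg (by linarith)] at hwz
    have hw4 : w ≤ w ^ 4 := le_self_pow₀ hw (by norm_num)
    rw [div_le_div_iff₀ (by linarith) hw0]
    linarith
  rcases le_total (-1) z with h2 | h2
  · have h := airy_first_derivative_test z 2 R 3 (by norm_num) (by linarith) (by norm_num)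
      fun ξ hξ => le_trans (by nlinarith [hξ.1]) (le_abs_self _)
    have h' := htriv 0 2 (by norm_num)
    rw [← intervalIntegral.integral_add_adjacent_intervals (hi 0 2) (hi 2 R)]
    refine (abs_add_le _ _).trans ?_
    have hz1 : |z| ≤ 1 := abs_le.2 ⟨h2, h1⟩
    have hw4 : w ≤ w ^ 4 := le_self_pow₀ hw (by norm_num)
    have : 10 ≤ 20 / w := by
      rw [le_div_iff₀ hw0]
      linarith
    linarith
  · -- `t = (-z)^{1/4}`, so the stationary point is `t²`.
    obtain ⟨t, ht0, ht⟩ : ∃ t : ℝ, 0 ≤ t ∧ t ^ 4 = -z := by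
      refine ⟨√(√(-z)), Real.sqrt_nonneg _, ?_⟩
      rw [show √(√(-z)) ^ 4 = (√(√(-z)) ^ 2) ^ 2 by ring, Real.sq_sqrt (Real.sqrt_nonneg _),
        Real.sq_sqrt (by linarith)]
    have ht1 : 1 ≤ t := by
      by_contra! hlt
      have := pow_lt_one₀ ht0 hlt (n := 4) (by norm_num)
      linarith
    have htpos : 0 < t := by linarith
    have hza : |z| = t ^ 4 := by rw [abs_of_nonpos (by linarith), ht]
    have hzt : z = -t ^ 4 := by linarith
    have hd0 : 0 < 1 / t := by positivity
    have hd1 : 1 / t ≤ 1 := by rw [div_le_one htpos]; exact ht1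
    have hdt : 1 / t * t = 1 := by field_simp
    have htt : 1 ≤ t ^ 2 := one_le_pow₀ ht1
    have ht24 : t ^ 2 ≤ t ^ 4 := pow_le_pow_right₀ ht1 (by norm_num)
    have hkey : 1 / t * t ^ 2 = t := by field_simp
    have hfac : ∀ ξ : ℝ, ξ ^ 2 + z = (ξ - t ^ 2) * (ξ + t ^ 2) := by
      intro ξ; rw [hzt]; ring
    have hA := airy_first_derivative_test z 0 (t ^ 2 - 1 / t) t le_rfl (by linarith) htpos <| by
      intro ξ hξ
      rw [hfac]
      refine le_trans ?_ (neg_le_abs _)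
      have h3 : 1 / t * t ^ 2 ≤ (t ^ 2 - ξ) * (ξ + t ^ 2) :=
        mul_le_mul (by linarith [hξ.2]) (by linarith [hξ.1]) (by positivity)
          (by linarith [hξ.2])
      linarith
    have hB := htriv (t ^ 2 - 1 / t) (t ^ 2 + 1 / t) (by linarith)
    have hC := airy_first_derivative_test z (t ^ 2 + 1 / t) R t (by positivity) (by linarith)
      htpos <| by
      intro ξ hξ
      rw [hfac]
      refine le_trans ?_ (le_abs_self _)
      have h3 : 1 / t * t ^ 2 ≤ (ξ - t ^ 2) * (ξ + t ^ 2) :=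
        mul_le_mul (by linarith [hξ.1]) (by linarith [hξ.1]) (by positivity)
          (by linarith [hξ.1])
      linarith
    have hw2t : w ≤ 2 * t := by
      refine le_of_pow_le_pow_left₀ (n := 4) (by norm_num) (by linarith) ?_
      rw [hwz, hza, mul_pow]
      linarith
    rw [← intervalIntegral.integral_add_adjacent_intervals (hi 0 (t ^ 2 - 1 / t)) (hi _ R),
      ← intervalIntegral.integral_add_adjacent_intervals
        (hi (t ^ 2 - 1 / t) (t ^ 2 + 1 / t)) (hi _ R)]
    have hsum : 10 / t ≤ 20 / w := by
      rw [div_le_div_iff₀ htpos hw0]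
      linarith
    have h4 : 4 / t = 4 * (1 / t) := by ring
    have h10 : 10 / t = 10 * (1 / t) := by ring
    rw [h4] at hA hC
    rw [h10] at hsum
    refine (abs_add_le _ _).trans ?_
    linarith [abs_add_le
      (∫ ξ in (t ^ 2 - 1 / t)..(t ^ 2 + 1 / t), Real.cos (ξ ^ 3 / 3 + ξ * z))
      (∫ ξ in (t ^ 2 + 1 / t)..R, Real.cos (ξ ^ 3 / 3 + ξ * z))]

/-- There is `C > 0` such that `|Ai x| ≤ C (1+|x|)^{-1/4}` for every real `x`. -/
theorem airy_decay_bound :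
    ∃ C : ℝ, 0 < C ∧ ∀ x : ℝ, |Ai x| ≤ C * (1 + |x|) ^ (-(1/4) : ℝ) := by
  refine ⟨20, by norm_num, fun x => ?_⟩
  have hx := abs_nonneg x
  obtain ⟨L, hL⟩ := airy_limit_exists x
  have hAi : Ai x = 1 / π * L := (hL.const_mul (1 / π)).limUnder_eq
  have hw : 1 ≤ (1 + |x|) ^ (1/4 : ℝ) := Real.one_le_rpow (by linarith) (by norm_num)
  have hw4 : ((1 + |x|) ^ (1/4 : ℝ)) ^ 4 = 1 + |x| := by
    rw [← Real.rpow_natCast, ← Real.rpow_mul (by linarith)]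
    norm_num
  have hLb : |L| ≤ 20 / (1 + |x|) ^ (1/4 : ℝ) :=
    le_of_tendsto hL.abs <| (eventually_ge_atTop (2 + 2 * |x|)).mono fun R hR =>
      airy_truncated_bound x _ hw hw4 R hR
  rw [Real.rpow_neg (by linarith), ← div_eq_mul_inv, hAi, abs_mul]
  refine (mul_le_of_le_one_left (abs_nonneg _) ?_).trans hLb
  rw [abs_of_pos (by positivity), div_le_one Real.pi_pos]
  linarith [Real.pi_gt_three]
end

section
/- The Airy function Ai is differentiable on ℝ and there is a constant C > 0 such that for every real x, |Ai'(x)| ≤ C (1+|x|)^{1/4}. -/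
/-!
Shifting the contour of the defining oscillatory integral to the line `Im = 1` (Cauchy's theorem on
the rectangles `[-R, R] × [0, 1]`) gives
`Ai z = (1 / 2π) Re ∫ exp (i ((ξ + i)³ / 3 + (ξ + i) z)) dξ`,
where the integrand has modulus `exp (-ξ² + 1/3 - z)`. This integral converges absolutely, may be
differentiated twice under the integral sign, and integration of a total derivative yields the Airy
equation `Ai'' = z Ai`. The modulus bound also gives `|Ai' z| ≤ M exp (-z)`, which settles `z ≥ -1`.

For `z ≤ -1` put `z = -s²`, `W s = Ai (-s²)`, `V s = Ai' (-s²)`. The Airy equation says `W' = -2 s V`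
and `V' = 2 s³ W`. For the corrected energy `G = s W² + V² / s - W V / (2 s³)` all terms of leading
order cancel in the derivative: `G' = 3 W V / (2 s⁴)`. For `s ≥ 1` this gives `G' ≤ G / s⁴`, whence
`G` is bounded by Grönwall's argument. As `G ≥ (3/4) V² / s`, it follows that `V² ≤ K s`, that is,
`|Ai' z| ≤ √K |z|^{1/4}`.
-/

open MeasureTheory Filter Real Set
open scoped ENNReal Topology

/-- The complex Airy kernel `exp (i (w³ / 3 + w z))`. -/
noncomputable def airyKernel (w : ℂ) (z : ℝ) : ℂ :=
  Complex.exp (Complex.I * (w ^ 3 / 3 + w * z))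

/-- The `n`-th formal `z`-derivative of the Airy integral `∫ airyKernel w z dw` over the line
`Im w = 1`. -/
noncomputable def airyMoment (n : ℕ) (z : ℝ) : ℂ :=
  ∫ ξ : ℝ, (Complex.I * ((ξ : ℂ) + Complex.I)) ^ n * airyKernel ((ξ : ℂ) + Complex.I) z

/-! ### The kernel -/

lemma norm_airyKernel (x y z : ℝ) :
    ‖airyKernel ((x : ℂ) + y * Complex.I) z‖ = Real.exp (-x ^ 2 * y + y ^ 3 / 3 - y * z) := by
  have h : Complex.I * (((x : ℂ) + y * Complex.I) ^ 3 / 3 + ((x : ℂ) + y * Complex.I) * z)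
      = ((-x ^ 2 * y + y ^ 3 / 3 - y * z : ℝ) : ℂ)
        + ((x ^ 3 / 3 - x * y ^ 2 + x * z : ℝ) : ℂ) * Complex.I := by
    push_cast
    linear_combination (x ^ 2 * y * 1 + x * y ^ 2 * Complex.I
      + y ^ 3 / 3 * (Complex.I ^ 2 - 1) + y * z) * Complex.I_sq
  rw [airyKernel, h, Complex.norm_exp]
  simp only [Complex.add_re, Complex.ofReal_re, Complex.re_ofReal_mul, Complex.I_re, mul_zero,
    add_zero]

lemma norm_airyKernel_line (x z : ℝ) :
    ‖airyKernel ((x : ℂ) + Complex.I) z‖ = Real.exp (-x ^ 2 + 1 / 3 - z) := by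
  have h := norm_airyKernel x 1 z
  simpa using h

lemma continuous_airyKernel (z : ℝ) : Continuous (fun w : ℂ => airyKernel w z) := by
  unfold airyKernel
  fun_prop

lemma hasDerivAt_airyKernel_param (w : ℂ) (z : ℝ) :
    HasDerivAt (fun z : ℝ => airyKernel w z) (Complex.I * w * airyKernel w z) z := by
  unfold airyKernel
  have h1 : HasDerivAt (fun z : ℝ => (z : ℂ)) 1 z := Complex.ofRealCLM.hasDerivAt
  have h2 := (((h1.const_mul w).const_add (w ^ 3 / 3)).const_mul Complex.I).cexp
  convert h2 using 1
  ring

lemma hasDerivAt_airyKernel_line (x z : ℝ) :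
    HasDerivAt (fun x : ℝ => airyKernel ((x : ℂ) + Complex.I) z)
      (Complex.I * (((x : ℂ) + Complex.I) ^ 2 + z) * airyKernel ((x : ℂ) + Complex.I) z) x := by
  unfold airyKernel
  have h1 : HasDerivAt (fun x : ℝ => (x : ℂ) + Complex.I) 1 x :=
    (Complex.ofRealCLM.hasDerivAt (x := x)).add_const _
  have h2 := ((((h1.pow 3).div_const 3).add (h1.mul_const (z : ℂ))).const_mul Complex.I).cexp
  refine h2.congr_deriv ?_
  simp only [Pi.add_apply, Pi.pow_apply]
  push_cast
  ring

/-! ### Absolute convergence and differentiation under the integral sign -/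

/-- Up to the second moment, half of the Gaussian decay of the kernel absorbs the polynomial
factor. -/
lemma norm_moment_integrand_le {n : ℕ} (hn : n ≤ 2) (x z : ℝ) :
    ‖(Complex.I * ((x : ℂ) + Complex.I)) ^ n * airyKernel ((x : ℂ) + Complex.I) z‖
      ≤ 2 * Real.exp (1 / 3 - z) * Real.exp (-(1 / 2) * x ^ 2) := by
  have hsq : ‖(x : ℂ) + Complex.I‖ ^ 2 = 1 + x ^ 2 := by
    rw [Complex.sq_norm, Complex.normSq_apply]
    simp
    ring
  have hnn := norm_nonneg ((x : ℂ) + Complex.I)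
  have h1 : 1 ≤ ‖(x : ℂ) + Complex.I‖ := by nlinarith [sq_nonneg x]
  have hp : ‖(x : ℂ) + Complex.I‖ ^ n ≤ 2 * Real.exp (x ^ 2 / 2) := by
    calc ‖(x : ℂ) + Complex.I‖ ^ n ≤ ‖(x : ℂ) + Complex.I‖ ^ 2 := pow_le_pow_right₀ h1 hn
      _ = 1 + x ^ 2 := hsq
      _ ≤ 2 * Real.exp (x ^ 2 / 2) := by
        have := Real.add_one_le_exp (x ^ 2 / 2)
        linarith
  rw [norm_mul, norm_pow, norm_mul, Complex.norm_I, one_mul, norm_airyKernel_line]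
  calc ‖(x : ℂ) + Complex.I‖ ^ n * Real.exp (-x ^ 2 + 1 / 3 - z)
      ≤ 2 * Real.exp (x ^ 2 / 2) * Real.exp (-x ^ 2 + 1 / 3 - z) := by gcongr
    _ = 2 * Real.exp (1 / 3 - z) * Real.exp (-(1 / 2) * x ^ 2) := by
      rw [mul_assoc, mul_assoc, ← Real.exp_add, ← Real.exp_add]
      congr 2
      ring

lemma continuous_moment_integrand (n : ℕ) (z : ℝ) : Continuous (fun x : ℝ =>
    (Complex.I * ((x : ℂ) + Complex.I)) ^ n * airyKernel ((x : ℂ) + Complex.I) z) := by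
  have := (continuous_airyKernel z).comp (f := fun x : ℝ => (x : ℂ) + Complex.I) (by fun_prop)
  exact Continuous.mul (by fun_prop) this

lemma integrable_gaussian_majorant (c : ℝ) :
    Integrable (fun x : ℝ => c * Real.exp (-(1 / 2) * x ^ 2)) :=
  (integrable_exp_neg_mul_sq (by norm_num)).const_mul c

lemma integrable_moment_integrand {n : ℕ} (hn : n ≤ 2) (z : ℝ) : Integrable (fun x : ℝ =>
    (Complex.I * ((x : ℂ) + Complex.I)) ^ n * airyKernel ((x : ℂ) + Complex.I) z) :=
  (integrable_gaussian_majorant _).mono' (continuous_moment_integrand n z).aestronglyMeasurable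
    (Eventually.of_forall fun x => norm_moment_integrand_le hn x z)

lemma hasDerivAt_airyMoment {n : ℕ} (hn : n ≤ 1) (z : ℝ) :
    HasDerivAt (airyMoment n) (airyMoment (n + 1) z) z := by
  refine (hasDerivAt_integral_of_dominated_loc_of_deriv_le
    (bound := fun x : ℝ => 2 * Real.exp (1 / 3 - (z - 1)) * Real.exp (-(1 / 2) * x ^ 2))
    (F' := fun z x => (Complex.I * ((x : ℂ) + Complex.I)) ^ (n + 1)
      * airyKernel ((x : ℂ) + Complex.I) z)
    (Ioi_mem_nhds (sub_one_lt z))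
    (Eventually.of_forall fun y => (continuous_moment_integrand n y).aestronglyMeasurable)
    (integrable_moment_integrand (by omega) z)
    (continuous_moment_integrand (n + 1) z).aestronglyMeasurable
    (Eventually.of_forall fun x y hy => ?_) (integrable_gaussian_majorant _)
    (Eventually.of_forall fun x y _ => ?_)).2
  · refine (norm_moment_integrand_le (by omega) x y).trans ?_
    have : z - 1 ≤ y := le_of_lt hy
    gcongr
  · refine ((hasDerivAt_airyKernel_param ((x : ℂ) + Complex.I) y).const_mul
      ((Complex.I * ((x : ℂ) + Complex.I)) ^ n)).congr_deriv ?_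
    ring

/-- The Airy equation: `I₂ - z I₀` is the integral of a total derivative. -/
lemma airyMoment_two (z : ℝ) : airyMoment 2 z = z * airyMoment 0 z := by
  have i0 := integrable_moment_integrand (n := 0) (by norm_num) z
  have i2 := integrable_moment_integrand (n := 2) le_rfl z
  have hd : ∀ x : ℝ, HasDerivAt (fun x : ℝ => Complex.I * airyKernel ((x : ℂ) + Complex.I) z)
      ((Complex.I * ((x : ℂ) + Complex.I)) ^ 2 * airyKernel ((x : ℂ) + Complex.I) z
        - z * ((Complex.I * ((x : ℂ) + Complex.I)) ^ 0
          * airyKernel ((x : ℂ) + Complex.I) z)) x := by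
    intro x
    refine ((hasDerivAt_airyKernel_line x z).const_mul Complex.I).congr_deriv ?_
    linear_combination (z * airyKernel ((x : ℂ) + Complex.I) z) * Complex.I_sq
  have h := integral_eq_zero_of_hasDerivAt_of_integrable hd (i2.sub (i0.const_mul _))
    (by simpa using i0.const_mul Complex.I)
  rw [integral_sub i2 (i0.const_mul _), integral_const_mul] at h
  exact sub_eq_zero.mp h

/-! ### The contour shift -/

/-- The vertical sides of the rectangle contribute nothing in the limit, since there the kernel
has modulus at most a constant times `exp (-R² y)`. -/
lemma tendsto_vertical_side (z : ℝ) (f : ℝ → ℝ) (hf : Tendsto (fun R => f R ^ 2) atTop atTop) :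
    Tendsto (fun R : ℝ => ∫ y in (0:ℝ)..1, airyKernel ((f R : ℂ) + y * Complex.I) z)
      atTop (𝓝 0) := by
  have h := intervalIntegral.tendsto_integral_filter_of_dominated_convergence
    (a := 0) (b := 1) (μ := volume) (l := atTop) (f := fun _ : ℝ => (0 : ℂ))
    (F := fun (R : ℝ) (y : ℝ) => airyKernel ((f R : ℂ) + y * Complex.I) z)
    (fun _ => Real.exp (1 / 3 + |z|)) (Eventually.of_forall fun R => ?_)
    (Eventually.of_forall fun R => Eventually.of_forall fun y hy => ?_)
    intervalIntegrable_const (Eventually.of_forall fun y hy => ?_)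
  · simpa using h
  · exact ((continuous_airyKernel z).comp
      (f := fun y : ℝ => (f R : ℂ) + y * Complex.I) (by fun_prop)).aestronglyMeasurable
  · rw [uIoc_of_le zero_le_one] at hy
    rw [norm_airyKernel]
    have h3 : y ^ 3 ≤ 1 := pow_le_one₀ hy.1.le hy.2
    have h4 : -(y * z) ≤ |z| := by
      calc -(y * z) ≤ |y * z| := neg_le_abs _
        _ = y * |z| := by rw [abs_mul, abs_of_pos hy.1]
        _ ≤ |z| := mul_le_of_le_one_left (abs_nonneg z) hy.2
    have h5 : 0 ≤ f R ^ 2 * y := mul_nonneg (sq_nonneg _) hy.1.le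
    apply Real.exp_le_exp.mpr
    linarith
  · rw [uIoc_of_le zero_le_one] at hy
    rw [tendsto_zero_iff_norm_tendsto_zero]
    simp_rw [norm_airyKernel]
    refine Real.tendsto_exp_atBot.comp ?_
    have h6 : Tendsto (fun R => -(f R ^ 2 * y)) atTop atBot :=
      tendsto_neg_atTop_atBot.comp (hf.atTop_mul_const hy.1)
    refine (tendsto_atBot_add_const_right _ (y ^ 3 / 3 - y * z) h6).congr fun R => ?_
    ring

lemma tendsto_real_line (z : ℝ) :
    Tendsto (fun R : ℝ => ∫ x in (-R)..R, airyKernel (x : ℂ) z) atTop (𝓝 (airyMoment 0 z)) := by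
  have hC : ∀ R : ℝ, ∫ x in (-R)..R, airyKernel (x : ℂ) z
      = (∫ x in (-R)..R, airyKernel ((x : ℂ) + Complex.I) z)
        - Complex.I * (∫ y in (0:ℝ)..1, airyKernel (((R : ℝ) : ℂ) + y * Complex.I) z)
        + Complex.I * (∫ y in (0:ℝ)..1, airyKernel (((-R : ℝ) : ℂ) + y * Complex.I) z) := by
    intro R
    have h := Complex.integral_boundary_rect_eq_zero_of_differentiableOn
      (fun w => airyKernel w z) ((-R : ℝ) : ℂ) ((R : ℂ) + Complex.I) (by
        unfold airyKernel
        fun_prop)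
    simp only [Complex.ofReal_re, Complex.ofReal_im, Complex.add_re, Complex.add_im, Complex.I_re,
      Complex.I_im, add_zero, zero_add, Complex.ofReal_zero, zero_mul, Complex.ofReal_one, one_mul,
      smul_eq_mul] at h
    linear_combination h
  have h1 : Tendsto (fun R : ℝ => ∫ x in (-R)..R, airyKernel ((x : ℂ) + Complex.I) z) atTop
      (𝓝 (airyMoment 0 z)) := by
    have i0 := integrable_moment_integrand (n := 0) (by norm_num) z
    simpa [airyMoment] using
      intervalIntegral_tendsto_integral i0 tendsto_neg_atTop_atBot tendsto_id
  have h2 := tendsto_vertical_side z (fun R => R) (tendsto_pow_atTop two_ne_zero)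
  have h3 := tendsto_vertical_side z (fun R => -R) (by
    simp)
  have h := (h1.sub (h2.const_mul Complex.I)).add (h3.const_mul Complex.I)
  simp only [mul_zero, sub_zero, add_zero] at h
  exact h.congr fun R => (hC R).symm

lemma re_integral_airyKernel (z R : ℝ) :
    (∫ x in (-R)..R, airyKernel (x : ℂ) z).re
      = 2 * ∫ ξ in (0:ℝ)..R, Real.cos (ξ ^ 3 / 3 + ξ * z) := by
  have hc : Continuous (fun x : ℝ => airyKernel (x : ℂ) z) :=
    (continuous_airyKernel z).comp Complex.continuous_ofReal
  have hre : ∀ x : ℝ, (airyKernel (x : ℂ) z).re = Real.cos (x ^ 3 / 3 + x * z) := by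
    intro x
    have : Complex.I * ((x : ℂ) ^ 3 / 3 + x * z)
        = ((x ^ 3 / 3 + x * z : ℝ) : ℂ) * Complex.I := by
      push_cast
      ring
    rw [airyKernel, this, Complex.exp_ofReal_mul_I_re]
  have h1 : (∫ x in (-R)..R, airyKernel (x : ℂ) z).re
      = ∫ x in (-R)..R, Real.cos (x ^ 3 / 3 + x * z) := by
    have := Complex.reCLM.intervalIntegral_comp_comm (μ := volume) (hc.intervalIntegrable (-R) R)
    simp only [Complex.reCLM_apply, hre] at this
    exact this.symm
  have hcos : Continuous (fun x : ℝ => Real.cos (x ^ 3 / 3 + x * z)) := by fun_prop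
  have h2 : ∫ x in (-R)..0, Real.cos (x ^ 3 / 3 + x * z)
      = ∫ x in (0:ℝ)..R, Real.cos (x ^ 3 / 3 + x * z) := by
    have := intervalIntegral.integral_comp_neg (a := 0) (b := R)
      (fun x : ℝ => Real.cos (x ^ 3 / 3 + x * z))
    rw [neg_zero] at this
    rw [← this]
    refine intervalIntegral.integral_congr fun x _ => ?_
    show Real.cos ((-x) ^ 3 / 3 + -x * z) = _
    rw [← Real.cos_neg]
    congr 1
    ring
  rw [h1, ← intervalIntegral.integral_add_adjacent_intervals
    (hcos.intervalIntegrable (-R) 0) (hcos.intervalIntegrable 0 R), h2]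
  ring

lemma Ai_eq_s15 (z : ℝ) : Ai z = (1 / (2 * π)) * (airyMoment 0 z).re := by
  refine Tendsto.limUnder_eq ?_
  have h := ((Complex.continuous_re.tendsto _).comp (tendsto_real_line z)).const_mul (1 / (2 * π))
  refine h.congr fun R => ?_
  simp only [Function.comp_apply, re_integral_airyKernel]
  field_simp

/-! ### The Airy equation and the bound on the right -/

lemma hasDerivAt_re_airyMoment {n : ℕ} (hn : n ≤ 1) (z : ℝ) :
    HasDerivAt (fun z => (1 / (2 * π)) * (airyMoment n z).re)
      ((1 / (2 * π)) * (airyMoment (n + 1) z).re) z :=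
  (Complex.reCLM.hasFDerivAt.comp_hasDerivAt z (hasDerivAt_airyMoment hn z)).const_mul _

lemma hasDerivAt_Ai (z : ℝ) : HasDerivAt Ai ((1 / (2 * π)) * (airyMoment 1 z).re) z := by
  rw [show Ai = fun z => (1 / (2 * π)) * (airyMoment 0 z).re from funext Ai_eq_s15]
  exact hasDerivAt_re_airyMoment (n := 0) (by norm_num) z

lemma deriv_Ai : deriv Ai = fun z => (1 / (2 * π)) * (airyMoment 1 z).re :=
  funext fun z => (hasDerivAt_Ai z).deriv

lemma hasDerivAt_deriv_Ai (z : ℝ) : HasDerivAt (deriv Ai) (z * Ai z) z := by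
  rw [deriv_Ai, Ai_eq_s15]
  convert hasDerivAt_re_airyMoment (n := 1) le_rfl z using 1
  rw [airyMoment_two, Complex.re_ofReal_mul]
  ring

lemma exists_bound_right : ∃ M : ℝ, 0 ≤ M ∧ ∀ x : ℝ, -1 ≤ x → |deriv Ai x| ≤ M := by
  refine ⟨(1 / (2 * π)) * ∫ x : ℝ, 2 * Real.exp (1 / 3 - (-1)) * Real.exp (-(1 / 2) * x ^ 2),
    by positivity, fun x hx => ?_⟩
  rw [deriv_Ai]
  simp only [abs_mul]
  rw [abs_of_pos (by positivity : 0 < 1 / (2 * π))]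
  refine mul_le_mul_of_nonneg_left ((Complex.abs_re_le_norm _).trans ?_) (by positivity)
  refine norm_integral_le_of_norm_le (integrable_gaussian_majorant _)
    (Eventually.of_forall fun y => (norm_moment_integrand_le (by norm_num) y x).trans ?_)
  gcongr

/-! ### The energy estimate on the left -/

/-- The corrected energy of `Ai` at `-s²`. The cross term cancels the leading oscillation in the
derivative of `s Ai² + Ai'² / s`. -/
noncomputable def airyEnergy (s : ℝ) : ℝ :=
  s * Ai (-s ^ 2) ^ 2 + deriv Ai (-s ^ 2) ^ 2 / s - Ai (-s ^ 2) * deriv Ai (-s ^ 2) / (2 * s ^ 3)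

lemma hasDerivAt_airyEnergy {s : ℝ} (hs : 0 < s) :
    HasDerivAt airyEnergy (3 / 2 * (Ai (-s ^ 2) * deriv Ai (-s ^ 2)) / s ^ 4) s := by
  have h0 : HasDerivAt (fun s : ℝ => -s ^ 2) (-(2 * s)) s := by
    refine (hasDerivAt_pow 2 s).neg.congr_deriv ?_
    norm_num
  have hW : HasDerivAt (fun s : ℝ => Ai (-s ^ 2)) (deriv Ai (-s ^ 2) * (-(2 * s))) s := by
    have := hasDerivAt_Ai (-s ^ 2)
    exact (this.differentiableAt.hasDerivAt).comp s h0
  have hV : HasDerivAt (fun s : ℝ => deriv Ai (-s ^ 2)) (-s ^ 2 * Ai (-s ^ 2) * (-(2 * s))) s :=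
    HasDerivAt.comp (h₂ := deriv Ai) s (hasDerivAt_deriv_Ai (-s ^ 2)) h0
  have hne : s ≠ 0 := hs.ne'
  have h := (((hasDerivAt_id s).mul (hW.pow 2)).add ((hV.pow 2).div (hasDerivAt_id s) hne)).sub
    ((hW.mul hV).div ((hasDerivAt_pow 3 s).const_mul 2) (by positivity))
  refine h.congr_deriv ?_
  simp only [id, Pi.mul_apply, Pi.pow_apply]
  push_cast
  field_simp
  ring

/-- Comparison of the corrected energy with the product driving its growth, and coercivity. -/
lemma airyEnergy_bounds {s : ℝ} (hs : 1 ≤ s) :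
    3 / 2 * (Ai (-s ^ 2) * deriv Ai (-s ^ 2)) ≤ airyEnergy s ∧
      3 / 4 * (deriv Ai (-s ^ 2) ^ 2 / s) ≤ airyEnergy s := by
  unfold airyEnergy
  set W := Ai (-s ^ 2)
  set V := deriv Ai (-s ^ 2)
  have hs0 : 0 < s := by linarith
  have hA : 0 ≤ s * W ^ 2 := by positivity
  have hB : 0 ≤ V ^ 2 / s := by positivity
  have hWV : |W * V| ≤ (s * W ^ 2 + V ^ 2 / s) / 2 := by
    have e1 : s * W ^ 2 + V ^ 2 / s - 2 * (W * V) = (s * W - V) ^ 2 / s := by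
      field_simp
      ring
    have e2 : s * W ^ 2 + V ^ 2 / s + 2 * (W * V) = (s * W + V) ^ 2 / s := by
      field_simp
      ring
    have p1 : 0 ≤ (s * W - V) ^ 2 / s := by positivity
    have p2 : 0 ≤ (s * W + V) ^ 2 / s := by positivity
    rw [abs_le]
    constructor <;> linarith
  have hc : W * V / (2 * s ^ 3) ≤ |W * V| / 2 := by
    have h3 : (1 : ℝ) ≤ s ^ 3 := one_le_pow₀ hs
    calc W * V / (2 * s ^ 3) ≤ |W * V| / (2 * s ^ 3) := by
          gcongr
          exact le_abs_self _
      _ ≤ |W * V| / 2 := by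
          gcongr
          linarith
  have hle := le_abs_self (W * V)
  constructor <;> linarith

/-- Grönwall's inequality for `G' ≤ G / s⁴`, with integrating factor `exp (1 / (3 s³))`. -/
lemma airyEnergy_le {s : ℝ} (hs : 1 ≤ s) :
    airyEnergy s ≤ airyEnergy 1 * Real.exp (1 / 3) := by
  have hd : ∀ r : ℝ, 0 < r → HasDerivAt (fun r => airyEnergy r * Real.exp (1 / 3 * (r ^ 3)⁻¹))
      ((3 / 2 * (Ai (-r ^ 2) * deriv Ai (-r ^ 2)) - airyEnergy r) / r ^ 4
        * Real.exp (1 / 3 * (r ^ 3)⁻¹)) r := by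
    intro r hr
    have hne : r ≠ 0 := hr.ne'
    have h := (hasDerivAt_airyEnergy hr).mul
      ((((hasDerivAt_pow 3 r).inv (by positivity)).const_mul (1 / 3)).exp)
    refine h.congr_deriv ?_
    simp only [Pi.inv_apply]
    push_cast
    field_simp
    ring
  have hanti : AntitoneOn (fun r => airyEnergy r * Real.exp (1 / 3 * (r ^ 3)⁻¹)) (Ici 1) := by
    refine antitoneOn_of_deriv_nonpos (convex_Ici 1)
      (fun r hr => (hd r (zero_lt_one.trans_le hr)).continuousAt.continuousWithinAt)
      (fun r hr => ?_) (fun r hr => ?_)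
    · rw [interior_Ici] at hr
      exact (hd r (zero_lt_one.trans hr)).differentiableAt.differentiableWithinAt
    · rw [interior_Ici] at hr
      rw [(hd r (zero_lt_one.trans hr)).deriv]
      have := (airyEnergy_bounds (le_of_lt hr)).1
      exact mul_nonpos_of_nonpos_of_nonneg
        (div_nonpos_of_nonpos_of_nonneg (by linarith) (by positivity)) (Real.exp_pos _).le
  have h := hanti (self_mem_Ici) hs hs
  have hs0 : 0 < s := by linarith
  have hG : 0 ≤ airyEnergy s := le_trans (by positivity) (airyEnergy_bounds hs).2
  have he : 1 ≤ Real.exp (1 / 3 * (s ^ 3)⁻¹) := Real.one_le_exp (by positivity)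
  calc airyEnergy s ≤ airyEnergy s * Real.exp (1 / 3 * (s ^ 3)⁻¹) := le_mul_of_one_le_right hG he
    _ ≤ airyEnergy 1 * Real.exp (1 / 3) := by simpa using h

lemma exists_bound_left : ∃ K : ℝ, 0 ≤ K ∧ ∀ x : ℝ, x ≤ -1 → deriv Ai x ^ 2 ≤ K * √(-x) := by
  have h1 : 0 ≤ airyEnergy 1 := le_trans (by positivity) (airyEnergy_bounds le_rfl).2
  refine ⟨4 / 3 * (airyEnergy 1 * Real.exp (1 / 3)), by positivity, fun x hx => ?_⟩
  have hs : 1 ≤ √(-x) := Real.one_le_sqrt.mpr (by linarith)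
  have hs0 : 0 < √(-x) := by linarith
  have h := (airyEnergy_bounds hs).2.trans (airyEnergy_le hs)
  rw [Real.sq_sqrt (by linarith), neg_neg] at h
  rw [← div_le_iff₀ hs0]
  linarith

/-- The Airy function is differentiable and there is `C > 0` with
`|Ai' x| ≤ C (1+|x|)^{1/4}` for every real `x`. -/
theorem airy_derivative_growth_bound :
    Differentiable ℝ Ai ∧
      ∃ C : ℝ, 0 < C ∧ ∀ x : ℝ, |deriv Ai x| ≤ C * (1 + |x|) ^ ((1/4) : ℝ) := by
  refine ⟨fun z => (hasDerivAt_Ai z).differentiableAt, ?_⟩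
  obtain ⟨M, hM, hright⟩ := exists_bound_right
  obtain ⟨K, hK, hleft⟩ := exists_bound_left
  refine ⟨M + √K + 1, by positivity, fun x => ?_⟩
  have hone : 1 ≤ (1 + |x|) ^ ((1/4) : ℝ) :=
    Real.one_le_rpow (by linarith [abs_nonneg x]) (by norm_num)
  have hsK := Real.sqrt_nonneg K
  rcases le_total (-1) x with hx | hx
  · have := hright x hx
    nlinarith
  · have hsq : ((1 + |x|) ^ ((1/4) : ℝ)) ^ 2 = √(1 + |x|) := by
      rw [← Real.rpow_natCast, ← Real.rpow_mul (by positivity), Real.sqrt_eq_rpow]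
      norm_num
    have hle : √(-x) ≤ √(1 + |x|) := Real.sqrt_le_sqrt (by linarith [neg_le_abs x])
    have h2 : deriv Ai x ^ 2 ≤ (√K * (1 + |x|) ^ ((1/4) : ℝ)) ^ 2 := by
      rw [mul_pow, hsq, Real.sq_sqrt hK]
      exact (hleft x hx).trans (by gcongr)
    have h3 := abs_le_of_sq_le_sq h2 (by positivity)
    nlinarith
end

section
/- Let φ be a Schwartz function on ℝ and for t > 0 define w(t,x) = (3t)^{−1/3} ∫_ℝ Ai( (x−y)/(3t)^{1/3} ) φ(y) dy. Then w is smooth in (t,x) on (0,∞)×ℝ, satisfies the linear KdV (Airy) equation ∂_t w + ∂_x³ w = 0 there, and w(t,·) → φ in L²(ℝ) as t → 0⁺. -/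
/-!
Everything rests on the formula, for `t > 0`,
`w(t, x) = ∫ exp (i (t (2πη)³ + 2π x η)) φ̂(η) dη` (`w_eq_fourier_integral`).

To obtain it, truncate the Airy integral at height `R`. Integration by parts away from the
stationary points (`norm_integral_cos_phase_le`) shows that the truncations converge and are bounded
by `|z| + 5` uniformly in `R`. By dominated convergence the integral of `Ai` against `φ` is then the
limit of the truncated ones, for which Fubini applies and brings out `φ̂`; a linear change of
variables finishes the computation.

Given the formula:
* joint smoothness holds since the right-hand side is the Fourier transform of a measure with finite
  moments carried by a cubic curve in the plane (`contDiff_fourier_integral`);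
* differentiating under the integral sign, `∂ₜ` brings down `i (2πη)³` and `∂ₓ³` brings down
  `(2πiη)³ = -i (2πη)³`, so the equation holds (`w_airy_equation`);
* by Plancherel, `‖w(t) - φ‖₂ = ‖(exp (i t (2πη)³) - 1) φ̂‖₂`, which tends to `0` by dominated
  convergence (`tendsto_eLpNorm_w_sub`).
-/

open MeasureTheory Filter Real Set
open scoped ENNReal Topology

/-- `w t x = (3t)^{-1/3} ∫ Ai ((x-y)/(3t)^{1/3}) φ(y) dy`. -/
noncomputable def w (φ : ℝ → ℂ) (t x : ℝ) : ℂ :=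
  ((3 * t) ^ (1/3 : ℝ))⁻¹ • ∫ y : ℝ, (Ai ((x - y) / (3 * t) ^ (1/3 : ℝ)) : ℂ) * φ y

/-! ### Convergence and growth of the Airy integral -/

/-- Van der Corput type bound: beyond `1 + |z|` the phase `p ξ = ξ³/3 + ξ z` satisfies
`p' ξ = ξ² + z ≥ ξ²/2` and `p'` is increasing, so integrating `cos p = (1/p') · (sin p)'` by parts
bounds the integral by `2 / p' a`. It yields both the convergence of the Airy integral and the
linear growth bound on its truncations. -/
lemma norm_integral_cos_phase_le {z a b : ℝ} (ha : 1 + |z| ≤ a) (hab : a ≤ b) :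
    |∫ ξ in a..b, Real.cos (ξ ^ 3 / 3 + ξ * z)| ≤ 4 / a ^ 2 := by
  have hz := abs_nonneg z
  have hz' := neg_abs_le z
  have hpos : ∀ ξ, a ≤ ξ → ξ ^ 2 / 2 ≤ ξ ^ 2 + z := by
    intro ξ hξ
    nlinarith [sq_nonneg z, sq_abs z]
  have ha0 : 0 < a := by linarith
  have hpos' : ∀ ξ ∈ uIcc a b, 0 < ξ ^ 2 + z := by
    intro ξ hξ
    rw [uIcc_of_le hab] at hξ
    have := hpos ξ hξ.1
    have : 0 < ξ := by linarith [hξ.1]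
    have : 0 < ξ ^ 2 := by positivity
    linarith
  have hu : ∀ ξ ∈ uIcc a b, HasDerivAt (fun ξ : ℝ => (ξ ^ 2 + z)⁻¹)
      (-(2 * ξ) / (ξ ^ 2 + z) ^ 2) ξ := by
    intro ξ hξ
    have := ((hasDerivAt_pow 2 ξ).add_const z).inv (hpos' ξ hξ).ne'
    convert! this using 1
    norm_num
  have hv : ∀ ξ ∈ uIcc a b, HasDerivAt (fun ξ : ℝ => Real.sin (ξ ^ 3 / 3 + ξ * z))
      (Real.cos (ξ ^ 3 / 3 + ξ * z) * (ξ ^ 2 + z)) ξ := by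
    intro ξ _
    have h1 : HasDerivAt (fun ξ : ℝ => ξ ^ 3 / 3 + ξ * z) (ξ ^ 2 + z) ξ := by
      have := ((hasDerivAt_pow 3 ξ).div_const 3).add ((hasDerivAt_id ξ).mul_const z)
      convert! this using 1
      norm_num
    exact h1.sin
  have hcu : ContinuousOn (fun ξ : ℝ => -(2 * ξ) / (ξ ^ 2 + z) ^ 2) (uIcc a b) := by
    refine ContinuousOn.div (by fun_prop) (by fun_prop) ?_
    intro ξ hξ
    have := hpos' ξ hξ
    positivity
  have hiu := hcu.intervalIntegrable (μ := volume)
  have hiv : IntervalIntegrable (fun ξ : ℝ => Real.cos (ξ ^ 3 / 3 + ξ * z) * (ξ ^ 2 + z))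
      volume a b := Continuous.intervalIntegrable (by fun_prop) _ _
  have key := intervalIntegral.integral_mul_deriv_eq_deriv_mul hu hv hiu hiv
  have hL : (∫ ξ in a..b, Real.cos (ξ ^ 3 / 3 + ξ * z)) =
      ∫ ξ in a..b, (ξ ^ 2 + z)⁻¹ * (Real.cos (ξ ^ 3 / 3 + ξ * z) * (ξ ^ 2 + z)) := by
    refine intervalIntegral.integral_congr fun ξ hξ => ?_
    have := (hpos' ξ hξ).ne'
    field_simp
  have hftc := intervalIntegral.integral_eq_sub_of_hasDerivAt hu hiu
  -- The weight `p''/p'²` is minus the derivative of `1/p'`, so the remainder telescopes.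
  have hrem : |∫ ξ in a..b, -(2 * ξ) / (ξ ^ 2 + z) ^ 2 * Real.sin (ξ ^ 3 / 3 + ξ * z)| ≤
      (a ^ 2 + z)⁻¹ - (b ^ 2 + z)⁻¹ := by
    have : (a ^ 2 + z)⁻¹ - (b ^ 2 + z)⁻¹ = ∫ ξ in a..b, -(-(2 * ξ) / (ξ ^ 2 + z) ^ 2) := by
      rw [intervalIntegral.integral_neg, hftc]; ring
    rw [this, ← Real.norm_eq_abs]
    refine intervalIntegral.norm_integral_le_of_norm_le hab ?_ hiu.neg
    refine Eventually.of_forall fun ξ hξ => ?_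
    have hξ0 : 0 < ξ := by linarith [hξ.1]
    rw [norm_mul, Real.norm_eq_abs, Real.norm_eq_abs, neg_div, abs_neg, neg_neg,
      abs_of_nonneg (by positivity : 0 ≤ 2 * ξ / (ξ ^ 2 + z) ^ 2)]
    exact mul_le_of_le_one_right (by positivity) (Real.abs_sin_le_one _)
  have hA := hpos' a left_mem_uIcc
  have hB := hpos' b right_mem_uIcc
  have hAinv : (a ^ 2 + z)⁻¹ ≤ 2 / a ^ 2 := by
    rw [← inv_div]
    exact inv_anti₀ (by positivity) (hpos a le_rfl)
  have hbd : ∀ c θ : ℝ, 0 < c → |c⁻¹ * Real.sin θ| ≤ c⁻¹ := by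
    intro c θ hc
    rw [abs_mul, abs_of_pos (inv_pos.2 hc)]
    exact mul_le_of_le_one_right (by positivity) (Real.abs_sin_le_one _)
  rw [hL, key]
  have h1 := abs_le.1 (hbd _ (b ^ 3 / 3 + b * z) hB)
  have h2 := abs_le.1 (hbd _ (a ^ 3 / 3 + a * z) hA)
  have h3 := abs_le.1 hrem
  have h4 : 4 / a ^ 2 = 2 * (2 / a ^ 2) := by ring
  rw [abs_le, h4]
  constructor <;> linarith [h1.1, h1.2, h2.1, h2.2, h3.1, h3.2]

lemma intervalIntegrable_cos_phase (z a b : ℝ) :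
    IntervalIntegrable (fun ξ : ℝ => Real.cos (ξ ^ 3 / 3 + ξ * z)) volume a b :=
  Continuous.intervalIntegrable (by fun_prop) _ _

lemma tendsto_Ai (z : ℝ) :
    Tendsto (fun R : ℝ => (1 / π) * ∫ ξ in (0:ℝ)..R, Real.cos (ξ ^ 3 / 3 + ξ * z))
      atTop (𝓝 (Ai z)) := by
  have hC : CauchySeq (fun R : ℝ => ∫ ξ in (0:ℝ)..R, Real.cos (ξ ^ 3 / 3 + ξ * z)) := by
    rw [Metric.cauchySeq_iff']
    intro ε hε
    have h0 : Tendsto (fun a : ℝ => 4 / a ^ 2) atTop (𝓝 0) :=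
      tendsto_const_nhds.div_atTop (tendsto_pow_atTop two_ne_zero)
    obtain ⟨N, hN1, hN2⟩ := ((h0.eventually_lt_const hε).and
      (eventually_ge_atTop (1 + |z|))).exists
    refine ⟨N, fun n hn => ?_⟩
    rw [Real.dist_eq, intervalIntegral.integral_interval_sub_left
      (intervalIntegrable_cos_phase _ _ _) (intervalIntegrable_cos_phase _ _ _)]
    exact (norm_integral_cos_phase_le hN2 hn).trans_lt hN1
  obtain ⟨l, hl⟩ := cauchySeq_tendsto_of_complete hC
  exact tendsto_nhds_limUnder ⟨_, hl.const_mul (1 / π)⟩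

/-- The truncated Airy integrals grow at most linearly in `z`, uniformly in the truncation; this
is the domination needed to pass to the limit against a Schwartz function. -/
lemma abs_integral_cos_phase_le (z : ℝ) {R : ℝ} (hR : 0 ≤ R) :
    |∫ ξ in (0:ℝ)..R, Real.cos (ξ ^ 3 / 3 + ξ * z)| ≤ |z| + 5 := by
  have htriv : ∀ M : ℝ, 0 ≤ M → |∫ ξ in (0:ℝ)..M, Real.cos (ξ ^ 3 / 3 + ξ * z)| ≤ M := by
    intro M hM
    have := intervalIntegral.norm_integral_le_of_norm_le_const (a := 0) (b := M) (C := 1)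
      (f := fun ξ : ℝ => Real.cos (ξ ^ 3 / 3 + ξ * z)) (fun ξ _ => Real.abs_cos_le_one _)
    simpa [abs_of_nonneg hM] using this
  have hz := abs_nonneg z
  rcases le_total R (1 + |z|) with h | h
  · linarith [htriv R hR]
  · rw [← intervalIntegral.integral_add_adjacent_intervals
      (intervalIntegrable_cos_phase z 0 (1 + |z|)) (intervalIntegrable_cos_phase z (1 + |z|) R)]
    refine (abs_add_le _ _).trans ?_
    have h1 := htriv (1 + |z|) (by positivity)
    have h2 := norm_integral_cos_phase_le (le_refl (1 + |z|)) h
    have h3 : 4 / (1 + |z|) ^ 2 ≤ 4 := div_le_self (by norm_num) (by nlinarith)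
    linarith

lemma ofReal_integral_cos_phase (z R : ℝ) :
    (((1 / π) * ∫ ξ in (0:ℝ)..R, Real.cos (ξ ^ 3 / 3 + ξ * z) : ℝ) : ℂ) =
      (1 / (2 * π) : ℂ) *
        ∫ ξ in (-R)..R, Complex.exp (Complex.I * (ξ ^ 3 / 3 + ξ * z)) := by
  have hi : ∀ a b : ℝ, IntervalIntegrable
      (fun ξ : ℝ => Complex.exp (Complex.I * (ξ ^ 3 / 3 + ξ * z))) volume a b :=
    fun a b => Continuous.intervalIntegrable (by fun_prop) _ _
  have hi' : IntervalIntegrable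
      (fun ξ : ℝ => Complex.exp (Complex.I * (((-ξ : ℝ) : ℂ) ^ 3 / 3 + ((-ξ : ℝ) : ℂ) * z)))
      volume 0 R := Continuous.intervalIntegrable (by fun_prop) _ _
  have h1 := intervalIntegral.integral_comp_neg (a := 0) (b := R)
    (fun ξ : ℝ => Complex.exp (Complex.I * (ξ ^ 3 / 3 + ξ * z)))
  rw [neg_zero] at h1
  rw [← intervalIntegral.integral_add_adjacent_intervals (hi (-R) 0) (hi 0 R), ← h1,
    ← intervalIntegral.integral_add hi' (hi 0 R)]
  have h2 : ∀ ξ : ℝ, Complex.exp (Complex.I * (((-ξ : ℝ) : ℂ) ^ 3 / 3 + ((-ξ : ℝ) : ℂ) * z)) +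
      Complex.exp (Complex.I * (ξ ^ 3 / 3 + ξ * z)) =
      2 * ((Real.cos (ξ ^ 3 / 3 + ξ * z) : ℝ) : ℂ) := by
    intro ξ
    push_cast
    rw [Complex.cos]
    ring_nf
  simp_rw [h2]
  rw [intervalIntegral.integral_const_mul, intervalIntegral.integral_ofReal]
  push_cast
  ring

/-! ### The Fourier representation of `w` -/

open scoped FourierTransform SchwartzMap

/-- Fubini for the truncated kernel: the `y`-integral produces the Fourier transform of `φ`. -/
lemma integral_truncated_kernel (φ : SchwartzMap ℝ ℂ) (s x : ℝ) {R : ℝ} (hR : 0 ≤ R) :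
    ∫ y : ℝ, (((1 / π) * ∫ ξ in (0:ℝ)..R,
        Real.cos (ξ ^ 3 / 3 + ξ * ((x - y) / s)) : ℝ) : ℂ) * φ y =
      (1 / (2 * π) : ℂ) * ∫ ξ in (-R)..R,
        Complex.exp (Complex.I * (ξ ^ 3 / 3 + ξ * (x / s))) * (𝓕 φ) (ξ / (2 * π * s)) := by
  have h1 : ∀ y : ℝ, (((1 / π) * ∫ ξ in (0:ℝ)..R,
        Real.cos (ξ ^ 3 / 3 + ξ * ((x - y) / s)) : ℝ) : ℂ) * φ y =
      (1 / (2 * π) : ℂ) * ∫ ξ in Ioc (-R) R,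
        Complex.exp (Complex.I * (ξ ^ 3 / 3 + ξ * ((x - y) / s : ℝ))) * φ y := by
    intro y
    rw [ofReal_integral_cos_phase, intervalIntegral.integral_of_le (by linarith),
      mul_assoc, ← integral_mul_const]
  simp_rw [h1]
  rw [integral_const_mul, intervalIntegral.integral_of_le (by linarith)]
  congr 1
  rw [integral_integral_swap]
  · refine integral_congr_ae (Eventually.of_forall fun ξ => ?_)
    simp only
    rw [SchwartzMap.fourier_coe, Real.fourier_real_eq_integral_exp_smul, ← integral_const_mul]
    refine integral_congr_ae (Eventually.of_forall fun y => ?_)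
    simp only [smul_eq_mul]
    rw [← mul_assoc, ← Complex.exp_add]
    congr 2
    push_cast
    -- For `s = 0` the quotients by `s` are all `0` by convention and the exponents agree.
    rcases eq_or_ne s 0 with rfl | hs
    · simp
    have : (s : ℂ) ≠ 0 := by exact_mod_cast hs
    have : (π : ℂ) ≠ 0 := by exact_mod_cast Real.pi_ne_zero
    field_simp
    ring
  · have hφ : Integrable (fun p : ℝ × ℝ => φ p.1)
        ((volume : Measure ℝ).prod (volume.restrict (Ioc (-R) R))) :=
      φ.integrable.comp_fst _
    refine hφ.mono ?_ (Eventually.of_forall fun p => ?_)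
    · have : Continuous (fun p : ℝ × ℝ =>
          Complex.exp (Complex.I * (p.2 ^ 3 / 3 + p.2 * ((x - p.1) / s : ℝ))) * φ p.1) := by
        have := φ.continuous
        fun_prop
      exact this.aestronglyMeasurable
    · simp only [Function.uncurry]
      rw [norm_mul]
      have : ‖Complex.exp (Complex.I * (p.2 ^ 3 / 3 + p.2 * ((x - p.1) / s : ℝ)))‖ = 1 := by
        have := Complex.norm_exp_I_mul_ofReal (p.2 ^ 3 / 3 + p.2 * ((x - p.1) / s))
        push_cast at this ⊢
        exact this
      rw [this, one_mul]

lemma tendsto_integral_truncated_kernel (φ : SchwartzMap ℝ ℂ) (s x : ℝ) :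
    Tendsto (fun R : ℝ => ∫ y : ℝ, (((1 / π) * ∫ ξ in (0:ℝ)..R,
        Real.cos (ξ ^ 3 / 3 + ξ * ((x - y) / s)) : ℝ) : ℂ) * φ y) atTop
      (𝓝 (∫ y : ℝ, (Ai ((x - y) / s) : ℂ) * φ y)) := by
  refine tendsto_integral_filter_of_dominated_convergence
    (fun y => ((|x| / |s| + 5) * ‖φ y‖ + (1 / |s|) * (‖y‖ ^ 1 * ‖φ y‖))) ?_ ?_ ?_ ?_
  · refine Eventually.of_forall fun R => ?_
    have hc : Continuous (fun z : ℝ => ∫ ξ in (0:ℝ)..R, Real.cos (ξ ^ 3 / 3 + ξ * z)) :=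
      intervalIntegral.continuous_parametric_intervalIntegral_of_continuous' (by fun_prop) _ _
    have hc' : Continuous (fun y : ℝ => ∫ ξ in (0:ℝ)..R,
        Real.cos (ξ ^ 3 / 3 + ξ * ((x - y) / s))) := hc.comp (by fun_prop)
    have := φ.continuous
    exact Continuous.aestronglyMeasurable (by fun_prop)
  · filter_upwards [eventually_ge_atTop 0] with R hR
    refine Eventually.of_forall fun y => ?_
    rw [norm_mul, Complex.norm_real, norm_mul, Real.norm_eq_abs, Real.norm_eq_abs, Real.norm_eq_abs]
    have h1 := abs_integral_cos_phase_le ((x - y) / s) hR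
    have h2 : |1 / π| ≤ 1 := by
      rw [abs_of_pos (by positivity), div_le_one (by positivity)]
      linarith [Real.pi_gt_three]
    have h3 : |(x - y) / s| ≤ |x| / |s| + (1 / |s|) * |y| := by
      rw [abs_div]
      calc |x - y| / |s| ≤ (|x| + |y|) / |s| := by
            gcongr
            exact abs_sub x y
        _ = _ := by ring
    have h4 : |1 / π| * |∫ ξ in (0:ℝ)..R, Real.cos (ξ ^ 3 / 3 + ξ * ((x - y) / s))| ≤
        1 * (|x| / |s| + (1 / |s|) * |y| + 5) := by
      gcongr
      linarith
    calc _ ≤ (1 * (|x| / |s| + (1 / |s|) * |y| + 5)) * ‖φ y‖ := by gcongr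
      _ = _ := by ring
  · exact (φ.integrable.norm.const_mul _).add ((φ.integrable_pow_mul volume 1).const_mul _)
  · refine Eventually.of_forall fun y => Tendsto.mul_const _ ?_
    exact (Complex.continuous_ofReal.tendsto _).comp (tendsto_Ai ((x - y) / s))

/-- The solution in Fourier variables: `w(t, ·)` arises from `φ` through the multiplier
`exp (i t (2πη)³)`. -/
lemma w_eq_fourier_integral (φ : SchwartzMap ℝ ℂ) {t : ℝ} (ht : 0 < t) (x : ℝ) :
    w φ t x = ∫ η : ℝ, Complex.exp (Complex.I * (t * (2 * π * η) ^ 3 + x * (2 * π * η))) *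
      (𝓕 φ) η := by
  set s : ℝ := (3 * t) ^ (1 / 3 : ℝ) with hs
  have hs0 : 0 < s := by positivity
  have hs3 : s ^ 3 = 3 * t := by
    rw [hs, ← Real.rpow_natCast, ← Real.rpow_mul (by positivity)]
    norm_num
  have hc : (2 * π * s) ≠ 0 := by positivity
  set F : ℝ → ℂ := fun ξ =>
    Complex.exp (Complex.I * (ξ ^ 3 / 3 + ξ * (x / s))) * (𝓕 φ) (ξ / (2 * π * s)) with hF
  have hFint : Integrable F := by
    have h1 : Integrable (fun ξ : ℝ => (𝓕 φ) (ξ / (2 * π * s))) :=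
      ((𝓕 φ).integrable (μ := volume)).comp_div hc
    refine h1.mono ?_ (Eventually.of_forall fun ξ => ?_)
    · have := (𝓕 φ).continuous
      exact Continuous.aestronglyMeasurable (by fun_prop)
    · have := Complex.norm_exp_I_mul_ofReal (ξ ^ 3 / 3 + ξ * (x / s))
      push_cast at this
      rw [hF, norm_mul, this, one_mul]
  have hlim : Tendsto (fun R : ℝ => (1 / (2 * π) : ℂ) * ∫ ξ in (-R)..R, F ξ) atTop
      (𝓝 ((1 / (2 * π) : ℂ) * ∫ ξ, F ξ)) :=
    (intervalIntegral_tendsto_integral hFint tendsto_neg_atTop_atBot tendsto_id).const_mul _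
  have hlim2 := tendsto_integral_truncated_kernel φ s x
  have heq := tendsto_nhds_unique (hlim2.congr' (by
    filter_upwards [eventually_ge_atTop 0] with R hR
    exact integral_truncated_kernel φ s x hR)) hlim
  -- The substitution `ξ = 2π s η`, where `s³ = 3t`, turns `ξ³/3` into `t (2πη)³`.
  have hsub := Measure.integral_comp_mul_left F (2 * π * s)
  have hFη : ∀ η : ℝ, F (2 * π * s * η) =
      Complex.exp (Complex.I * (t * (2 * π * η) ^ 3 + x * (2 * π * η))) * (𝓕 φ) η := by
    intro η
    have h3 : (s : ℂ) ^ 3 = 3 * t := by exact_mod_cast hs3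
    have hsC : (s : ℂ) ≠ 0 := by exact_mod_cast hs0.ne'
    simp only [hF]
    congr 2
    · push_cast
      congr 2
      · linear_combination ((2 * π * η) ^ 3 / 3 : ℂ) * h3
      · field_simp
    · rw [mul_div_cancel_left₀ _ hc]
  simp_rw [hFη] at hsub
  rw [w, ← hs, heq, hsub, abs_of_pos (by positivity)]
  simp only [Complex.real_smul]
  push_cast
  rw [← mul_assoc]
  congr 1
  field_simp

/-! ### The Airy equation -/

lemma hasDerivAt_integral_cexp {p : ℝ → ℝ} (hp : Continuous p) {g : ℝ → ℂ}
    (hg : Integrable g) (hpg : Integrable (fun η => Complex.I * p η * g η)) (s : ℝ) :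
    HasDerivAt (fun s : ℝ => ∫ η : ℝ, Complex.exp (Complex.I * (s * p η)) * g η)
      (∫ η : ℝ, Complex.exp (Complex.I * (s * p η)) * (Complex.I * p η * g η)) s := by
  have hnorm : ∀ s η : ℝ, ‖Complex.exp (Complex.I * (s * p η))‖ = 1 := by
    intro s η
    have := Complex.norm_exp_I_mul_ofReal (s * p η)
    push_cast at this
    exact this
  have hmeas : ∀ s : ℝ, AEStronglyMeasurable
      (fun η : ℝ => Complex.exp (Complex.I * (s * p η))) volume :=
    fun s => Continuous.aestronglyMeasurable (by fun_prop)
  refine (hasDerivAt_integral_of_dominated_loc_of_deriv_le (s := univ)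
    (F' := fun (s : ℝ) η => Complex.exp (Complex.I * (s * p η)) * (Complex.I * p η * g η))
    (bound := fun η => ‖Complex.I * p η * g η‖) univ_mem ?_ ?_ ?_ ?_ hpg.norm ?_).2
  · exact Eventually.of_forall fun s => (hmeas s).mul hg.1
  · exact hg.mono ((hmeas s).mul hg.1) (Eventually.of_forall fun η => by
      rw [norm_mul, hnorm, one_mul])
  · exact (hmeas s).mul hpg.1
  · exact Eventually.of_forall fun η s _ => by rw [norm_mul, hnorm, one_mul]
  · refine Eventually.of_forall fun η s _ => ?_
    have h1 : HasDerivAt (fun s : ℝ => Complex.I * ((s : ℂ) * p η)) (Complex.I * p η) s := by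
      have := ((Complex.ofRealCLM.hasDerivAt (x := s)).mul_const (p η : ℂ)).const_mul Complex.I
      simpa using this
    convert! (h1.cexp.mul_const (g η)) using 1
    ring

lemma iteratedDeriv_integral_cexp {p : ℝ → ℝ} (hp : Continuous p) {g : ℝ → ℂ}
    (hg : ∀ n : ℕ, Integrable (fun η => (Complex.I * p η) ^ n * g η)) (n : ℕ) :
    iteratedDeriv n (fun s : ℝ => ∫ η : ℝ, Complex.exp (Complex.I * (s * p η)) * g η) =
      fun s : ℝ => ∫ η : ℝ, Complex.exp (Complex.I * (s * p η)) *
        ((Complex.I * p η) ^ n * g η) := by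
  induction n with
  | zero => simp
  | succ n ih =>
    rw [iteratedDeriv_succ, ih]
    ext s
    have hsucc : ∀ η, Complex.I * p η * ((Complex.I * p η) ^ n * g η) =
        (Complex.I * p η) ^ (n + 1) * g η := fun η => by ring
    have := hasDerivAt_integral_cexp hp (hg n) (by simpa only [hsucc] using hg (n + 1)) s
    simpa only [hsucc] using this.deriv

lemma integrable_pow_mul_unimodular_mul (Φ : SchwartzMap ℝ ℂ) {c : ℝ → ℂ} (hc : Continuous c)
    (hc1 : ∀ η, ‖c η‖ = 1) (n : ℕ) :
    Integrable (fun η : ℝ => (Complex.I * (2 * π * η : ℝ)) ^ n * (c η * Φ η)) := by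
  refine ((Φ.integrable_pow_mul volume n).const_mul ((2 * π) ^ n)).mono ?_
    (Eventually.of_forall fun η => ?_)
  · have := Φ.continuous
    exact Continuous.aestronglyMeasurable (by fun_prop)
  · have : ‖((2 * π * η : ℝ) : ℂ)‖ = 2 * π * ‖η‖ := by
      rw [Complex.norm_real, norm_mul, Real.norm_of_nonneg (by positivity)]
    have h0 : 0 ≤ (2 * π) ^ n * (‖η‖ ^ n * ‖Φ η‖) := by positivity
    rw [norm_mul, norm_mul, hc1, norm_pow, norm_mul, Complex.norm_I, this,
      Real.norm_of_nonneg h0]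
    apply le_of_eq
    ring

lemma norm_cexp_I_mul_mul (a b : ℝ) : ‖Complex.exp (Complex.I * (a * b))‖ = 1 := by
  have := Complex.norm_exp_I_mul_ofReal (a * b)
  push_cast at this
  exact this

lemma w_airy_equation (φ : SchwartzMap ℝ ℂ) {t : ℝ} (ht : 0 < t) (x : ℝ) :
    deriv (fun s : ℝ => w (⇑φ) s x) t + iteratedDeriv 3 (fun y : ℝ => w (⇑φ) t y) x = 0 := by
  have hT : (fun s : ℝ => w (⇑φ) s x) =ᶠ[𝓝 t] fun s : ℝ => ∫ η : ℝ,
      Complex.exp (Complex.I * (s * ((2 * π * η) ^ 3 : ℝ))) *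
        (Complex.exp (Complex.I * (x * (2 * π * η : ℝ))) * (𝓕 φ) η) := by
    filter_upwards [Ioi_mem_nhds ht] with s hs
    rw [w_eq_fourier_integral φ hs]
    refine integral_congr_ae (Eventually.of_forall fun η => ?_)
    simp only
    rw [← mul_assoc (Complex.exp _) (Complex.exp _), ← Complex.exp_add]
    push_cast
    ring_nf
  have hX : (fun y : ℝ => w (⇑φ) t y) = fun y : ℝ => ∫ η : ℝ,
      Complex.exp (Complex.I * (y * (2 * π * η : ℝ))) *
        (Complex.exp (Complex.I * (t * ((2 * π * η) ^ 3 : ℝ))) * (𝓕 φ) η) := by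
    ext y
    rw [w_eq_fourier_integral φ ht]
    refine integral_congr_ae (Eventually.of_forall fun η => ?_)
    simp only
    rw [← mul_assoc (Complex.exp _) (Complex.exp _), ← Complex.exp_add]
    push_cast
    ring_nf
  have hi1 := integrable_pow_mul_unimodular_mul (𝓕 φ)
    (c := fun η => Complex.exp (Complex.I * (x * (2 * π * η : ℝ)))) (by fun_prop)
    (fun η => norm_cexp_I_mul_mul _ _)
  have hi2 := integrable_pow_mul_unimodular_mul (𝓕 φ)
    (c := fun η => Complex.exp (Complex.I * (t * ((2 * π * η) ^ 3 : ℝ)))) (by fun_prop)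
    (fun η => norm_cexp_I_mul_mul _ _)
  have hd := hasDerivAt_integral_cexp (p := fun η => (2 * π * η) ^ 3) (by fun_prop)
    (by simpa only [pow_zero, one_mul] using hi1 0) (by
      refine ((hi1 3).const_mul (-1)).congr (Eventually.of_forall fun η => ?_)
      simp only [mul_pow, Complex.I_pow_three]
      push_cast
      ring) t
  rw [hT.deriv_eq, hd.deriv, hX,
    iteratedDeriv_integral_cexp (p := fun η => 2 * π * η) (by fun_prop) hi2 3]
  simp only
  rw [add_eq_zero_iff_eq_neg, ← integral_neg]
  refine integral_congr_ae (Eventually.of_forall fun η => ?_)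
  simp only [mul_pow, Complex.I_pow_three]
  push_cast
  ring

/-! ### Convergence to the initial datum -/

lemma hasTemperateGrowth_cexp_I :
    Function.HasTemperateGrowth (fun θ : ℝ => Complex.exp (Complex.I * θ)) := by
  have hder : ∀ n : ℕ, iteratedDeriv n (fun θ : ℝ => Complex.exp (Complex.I * θ)) =
      fun θ : ℝ => Complex.I ^ n * Complex.exp (Complex.I * θ) := by
    intro n
    induction n with
    | zero => simp
    | succ n ih =>
      rw [iteratedDeriv_succ, ih]
      ext θ
      have h1 : HasDerivAt (fun s : ℝ => Complex.I * (s : ℂ)) Complex.I θ := by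
        simpa using (Complex.ofRealCLM.hasDerivAt (x := θ)).const_mul Complex.I
      rw [(h1.cexp.const_mul (Complex.I ^ n)).deriv]
      ring
  refine ⟨(contDiff_const.mul Complex.ofRealCLM.contDiff).cexp, fun n => ⟨0, 1, fun θ => ?_⟩⟩
  rw [norm_iteratedFDeriv_eq_norm_iteratedDeriv, hder, norm_mul, Complex.norm_exp_I_mul_ofReal]
  simp

/-- Temperate growth makes multiplication by the unimodular factor preserve Schwartz functions,
so that Plancherel's theorem for Schwartz functions applies to `w(t, ·)`. -/
lemma hasTemperateGrowth_multiplier (t : ℝ) :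
    Function.HasTemperateGrowth
      (fun η : ℝ => Complex.exp (Complex.I * ((t * (2 * π * η) ^ 3 : ℝ) : ℂ))) := by
  have : Function.HasTemperateGrowth (fun η : ℝ => t * (2 * π * η) ^ 3) := by fun_prop
  exact hasTemperateGrowth_cexp_I.comp this

lemma w_eq_fourierInv (φ : SchwartzMap ℝ ℂ) {t : ℝ} (ht : 0 < t) (x : ℝ) :
    w φ t x = 𝓕⁻ (SchwartzMap.smulLeftCLM ℂ
      (fun η : ℝ => Complex.exp (Complex.I * ((t * (2 * π * η) ^ 3 : ℝ) : ℂ))) (𝓕 φ)) x := by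
  rw [w_eq_fourier_integral φ ht, SchwartzMap.fourierInv_coe, Real.fourierInv_eq']
  refine integral_congr_ae (Eventually.of_forall fun η => ?_)
  simp only [SchwartzMap.smulLeftCLM_apply_apply (hasTemperateGrowth_multiplier t), smul_eq_mul]
  rw [← mul_assoc (Complex.exp _) (Complex.exp _), ← Complex.exp_add]
  congr 2
  simp
  ring

lemma eLpNorm_fourierInv (f : SchwartzMap ℝ ℂ) :
    eLpNorm (𝓕⁻ f : SchwartzMap ℝ ℂ) 2 volume = eLpNorm f 2 volume := by
  have h := SchwartzMap.norm_fourier_toL2_eq (𝓕⁻ f)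
  rw [FourierTransform.fourier_fourierInv_eq, SchwartzMap.norm_toLp, SchwartzMap.norm_toLp,
    ENNReal.toReal_eq_toReal_iff' (f.memLp 2 volume).2.ne ((𝓕⁻ f).memLp 2 volume).2.ne] at h
  exact h.symm

lemma tendsto_eLpNorm_w_sub (φ : SchwartzMap ℝ ℂ) :
    Tendsto (fun t : ℝ => eLpNorm (fun x : ℝ => w (⇑φ) t x - φ x) 2 (volume : Measure ℝ))
      (𝓝[>] (0:ℝ)) (𝓝 0) := by
  set m : ℝ → ℝ → ℂ :=
    fun t η => Complex.exp (Complex.I * ((t * (2 * π * η) ^ 3 : ℝ) : ℂ)) with hm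
  have hm1 : ∀ t η, ‖m t η‖ = 1 := fun t η => Complex.norm_exp_I_mul_ofReal _
  have hplanch : ∀ᶠ t in 𝓝[>] (0:ℝ),
      (∫⁻ η : ℝ, ‖(m t η - 1) * (𝓕 φ) η‖ₑ ^ (2:ℝ)) ^ (1 / 2 : ℝ) =
      eLpNorm (fun x : ℝ => w (⇑φ) t x - φ x) 2 (volume : Measure ℝ) := by
    filter_upwards [self_mem_nhdsWithin] with t ht
    set S : SchwartzMap ℝ ℂ := SchwartzMap.smulLeftCLM ℂ (m t) (𝓕 φ) - 𝓕 φ with hS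
    have h1 : (fun x : ℝ => w (⇑φ) t x - φ x) = (𝓕⁻ S : SchwartzMap ℝ ℂ) := by
      ext x
      rw [w_eq_fourierInv φ ht, hS, sub_eq_add_neg, sub_eq_add_neg, FourierTransform.fourierInv_add,
        FourierTransform.fourierInv_neg, FourierTransform.fourierInv_fourier_eq]
      rfl
    rw [h1, eLpNorm_fourierInv, eLpNorm_eq_lintegral_rpow_enorm_toReal (by simp) (by simp)]
    simp only [ENNReal.toReal_ofNat]
    congr 1
    refine lintegral_congr fun η => ?_
    rw [hS, sub_apply,
      SchwartzMap.smulLeftCLM_apply_apply (hasTemperateGrowth_multiplier t), smul_eq_mul,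
      sub_mul, one_mul]
  refine Tendsto.congr' hplanch ?_
  have hlim : Tendsto (fun t => ∫⁻ η : ℝ, ‖(m t η - 1) * (𝓕 φ) η‖ₑ ^ (2:ℝ)) (𝓝[>] (0:ℝ))
      (𝓝 (∫⁻ η : ℝ, 0)) := by
    refine tendsto_lintegral_filter_of_dominated_convergence
      (fun η => ‖2 * (𝓕 φ) η‖ₑ ^ (2:ℝ)) ?_ ?_ ?_ ?_
    · refine Eventually.of_forall fun t => ?_
      have := (𝓕 φ).continuous
      have hc : Continuous (fun η => (m t η - 1) * (𝓕 φ) η) := by fun_prop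
      exact hc.measurable.enorm.pow_const _
    · refine Eventually.of_forall fun t => Eventually.of_forall fun η => ?_
      gcongr ?_ ^ _
      rw [enorm_le_iff_norm_le, norm_mul, norm_mul]
      gcongr
      refine (norm_sub_le _ _).trans ?_
      rw [hm1]
      norm_num
    · have hL : MemLp (fun η => 2 * (𝓕 φ) η) 2 (volume : Measure ℝ) :=
        ((𝓕 φ).memLp 2 volume).const_mul 2
      have := lintegral_rpow_enorm_lt_top_of_eLpNorm_lt_top (by simp) (by simp) hL.2
      simpa using this.ne
    · refine Eventually.of_forall fun η => ?_
      have hc : Continuous (fun t => ‖(m t η - 1) * (𝓕 φ) η‖ₑ ^ (2:ℝ)) := by fun_prop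
      have := hc.tendsto 0
      have h0 : ‖(m 0 η - 1) * (𝓕 φ) η‖ₑ ^ (2:ℝ) = 0 := by simp [hm]
      rw [h0] at this
      exact this.mono_left nhdsWithin_le_nhds
  have := (ENNReal.continuous_rpow_const (y := (1 / 2 : ℝ))).tendsto _ |>.comp hlim
  simpa [Function.comp_def] using this

/-! ### Joint smoothness -/

/-- The integral is the Fourier transform, on `ℝ × ℝ`, of a function on the cubic curve
`η ↦ (-4π²η³, -η)` against the push-forward of Lebesgue measure. All its moments are finite
because `Φ` is Schwartz, hence it is smooth. -/
lemma contDiff_fourier_integral (Φ : SchwartzMap ℝ ℂ) :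
    ContDiff ℝ (⊤ : ℕ∞) (fun p : ℝ × ℝ => ∫ η : ℝ,
      Complex.exp (Complex.I * (p.1 * (2 * π * η) ^ 3 + p.2 * (2 * π * η))) * Φ η) := by
  set L : (ℝ × ℝ) →L[ℝ] (ℝ × ℝ) →L[ℝ] ℝ :=
    (ContinuousLinearMap.mul ℝ ℝ).bilinearComp
        (ContinuousLinearMap.fst ℝ ℝ ℝ) (ContinuousLinearMap.fst ℝ ℝ ℝ) +
      (ContinuousLinearMap.mul ℝ ℝ).bilinearComp
        (ContinuousLinearMap.snd ℝ ℝ ℝ) (ContinuousLinearMap.snd ℝ ℝ ℝ) with hL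
  set γ : ℝ → ℝ × ℝ := fun η => (-(4 * π ^ 2 * η ^ 3), -η) with hγ
  have hγc : Continuous γ := by fun_prop
  set f : ℝ × ℝ → ℂ := fun v => Φ (-v.2) with hf
  have hfc : Continuous f := Φ.continuous.comp (by fun_prop)
  have hmain := VectorFourier.contDiff_fourierIntegral (N := ⊤) (μ := volume.map γ) (f := f) L (by
    intro n _
    have hcont : Continuous (fun v : ℝ × ℝ => ‖v‖ ^ n * ‖f v‖) := by fun_prop
    rw [integrable_map_measure hcont.aestronglyMeasurable hγc.aemeasurable]
    refine (((Φ.integrable_pow_mul volume (3 * n)).const_mul (2 ^ (n - 1) * (4 * π ^ 2) ^ n)).add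
      ((Φ.integrable_pow_mul volume n).const_mul (2 ^ (n - 1)))).mono
      (hcont.comp hγc).aestronglyMeasurable (Eventually.of_forall fun η => ?_)
    have hn : ‖γ η‖ ≤ 4 * π ^ 2 * ‖η‖ ^ 3 + ‖η‖ := by
      rw [Prod.norm_def]
      simp only [hγ, norm_neg, norm_mul, norm_pow]
      rw [Real.norm_of_nonneg (by norm_num : (0:ℝ) ≤ 4), Real.norm_of_nonneg Real.pi_pos.le]
      refine max_le ?_ ?_
      · linarith [norm_nonneg η]
      · have : 0 ≤ 4 * π ^ 2 * ‖η‖ ^ 3 := by positivity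
        linarith
    have hpow : ‖γ η‖ ^ n ≤ 2 ^ (n - 1) * ((4 * π ^ 2 * ‖η‖ ^ 3) ^ n + ‖η‖ ^ n) :=
      (pow_le_pow_left₀ (norm_nonneg _) hn n).trans
        (add_pow_le (by positivity) (by positivity) n)
    simp only [Function.comp_apply, Pi.add_apply]
    rw [Real.norm_of_nonneg (by positivity), Real.norm_of_nonneg (by positivity)]
    have hfγ : f (γ η) = Φ η := by simp [hf, hγ]
    rw [hfγ]
    calc _ ≤ (2 ^ (n - 1) * ((4 * π ^ 2 * ‖η‖ ^ 3) ^ n + ‖η‖ ^ n)) * ‖Φ η‖ := by gcongr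
      _ = _ := by ring)
  convert! hmain using 1
  ext p
  rw [VectorFourier.fourierIntegral, integral_map hγc.aemeasurable]
  · refine integral_congr_ae (Eventually.of_forall fun η => ?_)
    simp only [hf, hγ, hL]
    rw [Circle.smul_def, Real.fourierChar_apply, smul_eq_mul]
    simp
    left
    congr 1
    ring
  · have : Continuous (fun v : ℝ × ℝ => Real.fourierChar (-(L.toLinearMap₁₂ v p)) • f v) := by
      have h1 : Continuous (fun v : ℝ × ℝ => -(L v p)) := by fun_prop
      exact (Real.continuous_fourierChar.comp h1).smul hfc
    exact this.aestronglyMeasurable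

/-- For Schwartz `φ`, the function `w` is smooth on `(0,∞) × ℝ`, solves the linear KdV
equation `∂ₜ w + ∂ₓ³ w = 0` there, and `w(t, ·) → φ` in `L²` as `t → 0⁺`. -/
theorem kdv_solution_properties (φ : SchwartzMap ℝ ℂ) :
    ContDiffOn ℝ (⊤ : ℕ∞) (fun p : ℝ × ℝ => w (⇑φ) p.1 p.2) (Ioi (0:ℝ) ×ˢ univ) ∧
    (∀ t : ℝ, 0 < t → ∀ x : ℝ,
      deriv (fun s : ℝ => w (⇑φ) s x) t + iteratedDeriv 3 (fun y : ℝ => w (⇑φ) t y) x = 0) ∧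
    Tendsto (fun t : ℝ => eLpNorm (fun x : ℝ => w (⇑φ) t x - φ x) 2 (volume : Measure ℝ))
      (𝓝[>] (0:ℝ)) (𝓝 0) := by
  refine ⟨?_, fun t ht x => w_airy_equation φ ht x, tendsto_eLpNorm_w_sub φ⟩
  exact (contDiff_fourier_integral (𝓕 φ)).contDiffOn.congr
    fun p hp => w_eq_fourier_integral φ hp.1 p.2
end

section
/- For every t > 0 and every Schwartz function φ on ℝ, the Fourier transform of U(t)φ is given by (U(t)φ)^(ξ) = e^{i t ξ³/3} φ̂(ξ) for all ξ ∈ ℝ. Consequently, U(t) extends to an isometry of L²(ℝ). -/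
/-!
The operator `U t` is shown to be the inverse Fourier transform of a Schwartz function.

With `p(ξ) = ξ³/3 + ξz`, the derivative of `sin p / (1 + ξ²)` equals `cos p` up to a remainder
bounded by `(2 + |z|) / (1 + ξ²)` (`integral_cos_airy`). Hence the improper integral defining
`Ai z` converges, and its truncations are bounded by `3 + |z|` uniformly in the truncation
(`tendsto_airyTrunc`, `abs_airyTrunc_le`). Dominated convergence therefore allows `Ai` to be
replaced by its truncations in `U t φ`, for `φ` Schwartz. After rescaling, a truncation is
`∫_{-R}^{R} e^{2πiwz} e^{it(2πw)³/3} dw` (`scaled_airyTrunc`), and Fubini turns the truncated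
operator into `∫_{-R}^{R} e^{2πiwx} e^{it(2πw)³/3} 𝓕φ(w) dw` (`integral_trunc_kernel`). Letting
`R → ∞` gives `U t φ = 𝓕⁻ (e^{it(2πw)³/3} 𝓕φ)` (`U_eq_fourierInv`).

The phase has temperate growth, so the function being inverted is Schwartz. Fourier inversion then
yields the multiplier formula, and Plancherel, together with the phase having modulus one, yields
the equality of `L²` norms.
-/


open MeasureTheory Filter Real Set
open scoped ENNReal Topology

/-! ### Convergence of the Airy integral -/

/-- The remainder left when `cos (ξ³/3 + ξz)` is integrated by parts with weight `1/(1+ξ²)`. -/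
noncomputable def airyRem (z ξ : ℝ) : ℝ :=
  2 * ξ * Real.sin (ξ ^ 3 / 3 + ξ * z) / (1 + ξ ^ 2) ^ 2
    + (1 - z) * Real.cos (ξ ^ 3 / 3 + ξ * z) / (1 + ξ ^ 2)

lemma continuous_airyRem (z : ℝ) : Continuous (airyRem z) := by
  unfold airyRem
  refine (Continuous.div (by fun_prop) (by fun_prop) fun x => by positivity).add
    (Continuous.div (by fun_prop) (by fun_prop) fun x => by positivity)

lemma abs_airyRem_le (z ξ : ℝ) : |airyRem z ξ| ≤ (2 + |z|) * (1 + ξ ^ 2)⁻¹ := by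
  have h0 : (0 : ℝ) < 1 + ξ ^ 2 := by positivity
  have h1 : |2 * ξ * Real.sin (ξ ^ 3 / 3 + ξ * z) / (1 + ξ ^ 2) ^ 2| ≤ 1 * (1 + ξ ^ 2)⁻¹ := by
    have hs := Real.abs_sin_le_one (ξ ^ 3 / 3 + ξ * z)
    have hξ : |2 * ξ| ≤ 1 + ξ ^ 2 := by
      rw [abs_le]; constructor <;> nlinarith [sq_nonneg (ξ - 1), sq_nonneg (ξ + 1)]
    rw [abs_div, abs_mul, abs_of_pos (by positivity : 0 < (1 + ξ ^ 2) ^ 2),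
      div_le_iff₀ (by positivity)]
    calc |2 * ξ| * |Real.sin (ξ ^ 3 / 3 + ξ * z)| ≤ (1 + ξ ^ 2) * 1 := by gcongr
      _ = 1 * (1 + ξ ^ 2)⁻¹ * (1 + ξ ^ 2) ^ 2 := by field_simp
  have h2 : |(1 - z) * Real.cos (ξ ^ 3 / 3 + ξ * z) / (1 + ξ ^ 2)|
      ≤ (1 + |z|) * (1 + ξ ^ 2)⁻¹ := by
    have hc := Real.abs_cos_le_one (ξ ^ 3 / 3 + ξ * z)
    have hz : |1 - z| ≤ 1 + |z| := by simpa using abs_sub 1 z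
    rw [abs_div, abs_mul, abs_of_pos h0, div_eq_mul_inv]
    gcongr
    calc |1 - z| * |Real.cos (ξ ^ 3 / 3 + ξ * z)| ≤ (1 + |z|) * 1 := by gcongr
      _ = 1 + |z| := mul_one _
  calc |airyRem z ξ| ≤ _ := abs_add_le _ _
    _ ≤ 1 * (1 + ξ ^ 2)⁻¹ + (1 + |z|) * (1 + ξ ^ 2)⁻¹ := add_le_add h1 h2
    _ = _ := by ring

lemma integrable_airyRem (z : ℝ) : Integrable (airyRem z) :=
  (integrable_inv_one_add_sq.const_mul (2 + |z|)).mono'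
    (continuous_airyRem z).aestronglyMeasurable
    (Eventually.of_forall fun ξ => abs_airyRem_le z ξ)

/-- Integration by parts: with `p = ξ³/3 + ξz`, so `p' = ξ² + z`, the derivative of
`sin p / (1+ξ²)` is `cos p` up to the absolutely integrable remainder. -/
lemma integral_cos_airy (z R : ℝ) :
    ∫ ξ in (0:ℝ)..R, Real.cos (ξ ^ 3 / 3 + ξ * z)
      = Real.sin (R ^ 3 / 3 + R * z) / (1 + R ^ 2) + ∫ ξ in (0:ℝ)..R, airyRem z ξ := by
  have hder : ∀ ξ : ℝ, HasDerivAt (fun ξ : ℝ => Real.sin (ξ ^ 3 / 3 + ξ * z) / (1 + ξ ^ 2))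
      (Real.cos (ξ ^ 3 / 3 + ξ * z) - airyRem z ξ) ξ := by
    intro ξ
    have h0 : (1 : ℝ) + ξ ^ 2 ≠ 0 := by positivity
    have hp : HasDerivAt (fun ξ : ℝ => ξ ^ 3 / 3 + ξ * z) (ξ ^ 2 + z) ξ := by
      refine (((hasDerivAt_pow 3 ξ).div_const 3).add
        ((hasDerivAt_id ξ).mul_const z)).congr_deriv ?_
      norm_num
    have hq : HasDerivAt (fun ξ : ℝ => 1 + ξ ^ 2) (2 * ξ) ξ := by
      simpa using (hasDerivAt_pow 2 ξ).const_add 1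
    refine (hp.sin.div hq h0).congr_deriv ?_
    unfold airyRem
    field_simp
    ring
  have hc : Continuous fun ξ : ℝ => Real.cos (ξ ^ 3 / 3 + ξ * z) := by fun_prop
  have hi1 := hc.intervalIntegrable (μ := volume) 0 R
  have hi2 := (continuous_airyRem z).intervalIntegrable (μ := volume) 0 R
  have := intervalIntegral.integral_eq_sub_of_hasDerivAt (fun ξ _ => hder ξ) (hi1.sub hi2)
  rw [intervalIntegral.integral_sub hi1 hi2] at this
  simp at this
  linarith

/-- The truncated Airy integral `(1/π) ∫₀^R cos (ξ³/3 + ξz) dξ`. -/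
noncomputable def airyTrunc (R z : ℝ) : ℝ :=
  (1 / π) * ∫ ξ in (0:ℝ)..R, Real.cos (ξ ^ 3 / 3 + ξ * z)

lemma tendsto_airyTrunc (z : ℝ) : Tendsto (fun R => airyTrunc R z) atTop (𝓝 (Ai z)) := by
  have hb : Tendsto (fun R : ℝ => Real.sin (R ^ 3 / 3 + R * z) / (1 + R ^ 2)) atTop (𝓝 0) := by
    have h1 : Tendsto (fun R : ℝ => (1 + R ^ 2)⁻¹) atTop (𝓝 0) :=
      tendsto_inv_atTop_zero.comp
        (tendsto_atTop_add_const_left _ _ (tendsto_pow_atTop (by norm_num)))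
    refine squeeze_zero_norm (fun R => ?_) h1
    have h0 : (0 : ℝ) < 1 + R ^ 2 := by positivity
    rw [Real.norm_eq_abs, abs_div, abs_of_pos h0, div_eq_mul_inv]
    exact mul_le_of_le_one_left (by positivity) (Real.abs_sin_le_one _)
  have hi := intervalIntegral_tendsto_integral_Ioi 0 (integrable_airyRem z).integrableOn
    (tendsto_id (α := ℝ) (x := atTop))
  have h : ∃ l, Tendsto (fun R => airyTrunc R z) atTop (𝓝 l) := by
    refine ⟨_, ((hb.add hi).const_mul (1 / π)).congr fun R => ?_⟩
    rw [airyTrunc, integral_cos_airy]; rfl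
  exact tendsto_nhds_limUnder h

/-- A bound on the truncated Airy integrals that is uniform in the truncation; linear growth in
`z` is harmless against a Schwartz function. -/
lemma abs_airyTrunc_le (R z : ℝ) (hR : 0 ≤ R) : |airyTrunc R z| ≤ 3 + |z| := by
  have hπ := Real.pi_gt_three
  have h0 : (0 : ℝ) < 1 + R ^ 2 := by positivity
  have h1 : |Real.sin (R ^ 3 / 3 + R * z) / (1 + R ^ 2)| ≤ 1 := by
    rw [abs_div, abs_of_pos h0, div_le_one h0]
    nlinarith [Real.abs_sin_le_one (R ^ 3 / 3 + R * z), sq_nonneg R]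
  have h2 : |∫ ξ in (0:ℝ)..R, airyRem z ξ| ≤ (2 + |z|) * π := by
    have hle := intervalIntegral.norm_integral_le_of_norm_le (μ := volume) (f := airyRem z) hR
      (Eventually.of_forall fun ξ _ => abs_airyRem_le z ξ)
      ((integrable_inv_one_add_sq.const_mul (2 + |z|)).intervalIntegrable)
    refine hle.trans ?_
    rw [intervalIntegral.integral_of_le hR, ← integral_univ_inv_one_add_sq,
      ← integral_const_mul]
    exact setIntegral_le_integral (integrable_inv_one_add_sq.const_mul _)
      (Eventually.of_forall fun ξ => by positivity)
  rw [airyTrunc, integral_cos_airy, abs_mul, abs_of_pos (by positivity : 0 < 1 / π)]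
  rw [div_mul_eq_mul_div, div_le_iff₀ Real.pi_pos, one_mul]
  refine (abs_add_le _ _).trans ?_
  nlinarith

/-! ### The cubic phase as a Fourier multiplier -/

/-- The oscillatory phase `e^{it(2πw)³/3}`, with frequencies in the `2π`-normalization of
Mathlib's Fourier transform. -/
noncomputable def airyMul (t w : ℝ) : ℂ :=
  Complex.exp (Complex.I * ((t * (2 * π * w) ^ 3 / 3 : ℝ) : ℂ))

lemma norm_airyMul (t w : ℝ) : ‖airyMul t w‖ = 1 := by
  rw [airyMul, mul_comm, Complex.norm_exp_ofReal_mul_I]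

lemma continuous_airyMul (t : ℝ) : Continuous (airyMul t) := by
  unfold airyMul; fun_prop

lemma hasTemperateGrowth_expI :
    Function.HasTemperateGrowth (fun x : ℝ => Complex.exp (Complex.I * (x : ℂ))) := by
  have hd : ∀ n : ℕ, iteratedDeriv n (fun x : ℝ => Complex.exp (Complex.I * (x : ℂ)))
      = fun x : ℝ => Complex.I ^ n * Complex.exp (Complex.I * (x : ℂ)) := by
    intro n
    induction n with
    | zero => simp
    | succ n ih =>
      rw [iteratedDeriv_succ, ih]
      funext x
      have h : HasDerivAt (fun x : ℝ => Complex.I * (x : ℂ)) Complex.I x := by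
        simpa using (Complex.ofRealCLM.hasDerivAt (x := x)).const_mul Complex.I
      rw [(h.cexp.const_mul (Complex.I ^ n)).deriv]
      ring
  refine ⟨?_, fun n => ⟨0, 1, fun x => ?_⟩⟩
  · exact (contDiff_const.mul Complex.ofRealCLM.contDiff).cexp
  · rw [norm_iteratedFDeriv_eq_norm_iteratedDeriv, hd]
    simp [mul_comm Complex.I, Complex.norm_exp_ofReal_mul_I]

lemma hasTemperateGrowth_airyMul (t : ℝ) : Function.HasTemperateGrowth (airyMul t) := by
  have hp : Function.HasTemperateGrowth (fun w : ℝ => t / 3 * (2 * π * w) ^ 3) :=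
    (Function.HasTemperateGrowth.const (t / 3)).mul
      (((Function.HasTemperateGrowth.const (2 * π)).mul Function.HasTemperateGrowth.id').pow 3)
  convert hasTemperateGrowth_expI.comp hp using 1
  funext w
  simp only [airyMul, Function.comp]
  congr 3
  ring

/-- The rescaled truncated Airy integral as a symmetric truncation of the inverse Fourier
transform of `airyMul t`. -/
lemma scaled_airyTrunc (t : ℝ) (ht : 0 < t) (R z : ℝ) :
    (((t ^ (1/3 : ℝ))⁻¹ * airyTrunc (2 * π * t ^ (1/3 : ℝ) * R) (z / t ^ (1/3 : ℝ)) : ℝ) : ℂ)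
      = ∫ w in (-R)..R, Complex.exp (Complex.I * ((2 * π * w * z : ℝ) : ℂ)) * airyMul t w := by
  have hs : 0 < t ^ (1/3 : ℝ) := by positivity
  have hs3 : (t ^ (1/3 : ℝ)) ^ 3 = t := by
    rw [← Real.rpow_natCast, ← Real.rpow_mul ht.le]; norm_num
  generalize t ^ (1/3 : ℝ) = s at hs hs3
  set e : ℝ → ℂ := fun w => Complex.exp (Complex.I * ((2 * π * w * z : ℝ) : ℂ)) * airyMul t w
    with he
  have hec : Continuous e := by
    have := continuous_airyMul t
    fun_prop
  have hsub : ∫ ξ in (0:ℝ)..(2 * π * s * R), Real.cos (ξ ^ 3 / 3 + ξ * (z / s))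
      = (2 * π * s) * ∫ w in (0:ℝ)..R, Real.cos (t * (2 * π * w) ^ 3 / 3 + 2 * π * w * z) := by
    have := intervalIntegral.integral_comp_mul_left (a := 0) (b := R)
      (fun ξ : ℝ => Real.cos (ξ ^ 3 / 3 + ξ * (z / s))) (c := 2 * π * s) (by positivity)
    rw [mul_zero, smul_eq_mul] at this
    rw [eq_inv_mul_iff_mul_eq₀ (by positivity)] at this
    rw [← this]
    congr 2
    funext w
    congr 1
    rw [← hs3]
    field_simp
  have hneg : ∫ w in (-R)..0, e w = ∫ w in (0:ℝ)..R, e (-w) := by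
    rw [intervalIntegral.integral_comp_neg]; simp
  rw [← intervalIntegral.integral_add_adjacent_intervals
    (hec.intervalIntegrable (-R) 0) (hec.intervalIntegrable 0 R), hneg,
    ← intervalIntegral.integral_add
    (f := fun w => e (-w)) ((hec.comp continuous_neg).intervalIntegrable 0 R) (hec.intervalIntegrable 0 R)]
  have hcos : ∀ w, e (-w) + e w
      = ((2 * Real.cos (t * (2 * π * w) ^ 3 / 3 + 2 * π * w * z) : ℝ) : ℂ) := by
    intro w
    push_cast
    rw [Complex.two_cos]
    simp only [he, airyMul, ← Complex.exp_add]
    rw [add_comm]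
    congr 2 <;> push_cast <;> ring
  simp_rw [hcos]
  rw [intervalIntegral.integral_ofReal, intervalIntegral.integral_const_mul, airyTrunc, hsub]
  congr 1
  field_simp

open scoped FourierTransform SchwartzMap

/-! ### `U t φ` as an inverse Fourier transform -/

/-- The Schwartz function `w ↦ e^{it(2πw)³/3} 𝓕φ(w)`. -/
noncomputable def airySymbol (t : ℝ) (φ : 𝓢(ℝ, ℂ)) : 𝓢(ℝ, ℂ) :=
  SchwartzMap.smulLeftCLM ℂ (airyMul t) (𝓕 φ)

lemma airySymbol_apply (t : ℝ) (φ : 𝓢(ℝ, ℂ)) (w : ℝ) :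
    airySymbol t φ w = airyMul t w * 𝓕 (φ : ℝ → ℂ) w := by
  rw [airySymbol, SchwartzMap.smulLeftCLM_apply_apply (hasTemperateGrowth_airyMul t),
    smul_eq_mul, SchwartzMap.fourier_coe]

/-- Fubini for the truncated kernel. -/
lemma integral_trunc_kernel (t : ℝ) (φ : 𝓢(ℝ, ℂ)) (x R : ℝ) (hR : 0 ≤ R) :
    ∫ y : ℝ, (∫ w in (-R)..R,
        Complex.exp (Complex.I * ((2 * π * w * (x - y) : ℝ) : ℂ)) * airyMul t w) * φ y
      = ∫ w in (-R)..R, Complex.exp ((2 * π * w * x : ℝ) * Complex.I) * airySymbol t φ w := by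
  have hmc := continuous_airyMul t
  have hle : -R ≤ R := by linarith
  simp_rw [intervalIntegral.integral_of_le hle, ← integral_mul_const]
  rw [integral_integral_swap]
  · refine integral_congr_ae (Eventually.of_forall fun w => ?_)
    simp only
    rw [airySymbol_apply, Real.fourier_real_eq_integral_exp_smul, ← mul_assoc,
      ← integral_const_mul]
    congr 1
    funext y
    have : Complex.exp (Complex.I * ((2 * π * w * (x - y) : ℝ) : ℂ))
        = Complex.exp ((2 * π * w * x : ℝ) * Complex.I)
          * Complex.exp (((-2 * π * y * w : ℝ) : ℂ) * Complex.I) := by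
      rw [← Complex.exp_add]; congr 1; push_cast; ring
    rw [this, smul_eq_mul]
    ring
  · have hφ : Integrable (fun p : ℝ × ℝ => φ p.1)
        ((volume : Measure ℝ).prod (volume.restrict (Ioc (-R) R))) :=
      φ.integrable.comp_fst _
    have hφc := φ.continuous
    refine hφ.mono ?_ (Eventually.of_forall fun p => ?_)
    · apply Continuous.aestronglyMeasurable
      simp only [Function.uncurry_def]
      fun_prop
    · simp only [Function.uncurry]
      rw [norm_mul, norm_mul, norm_airyMul, mul_comm Complex.I, Complex.norm_exp_ofReal_mul_I]
      simp

/-- `U t φ` is the inverse Fourier transform of `e^{it(2πw)³/3} 𝓕φ(w)`: both are the limit of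
the integrals with truncated Airy kernel. -/
lemma U_eq_fourierInv (t : ℝ) (ht : 0 < t) (φ : 𝓢(ℝ, ℂ)) :
    U t φ = 𝓕⁻ (airySymbol t φ : ℝ → ℂ) := by
  funext x
  have hs : 0 < t ^ (1/3 : ℝ) := by positivity
  have hscale : Tendsto (fun R : ℝ => 2 * π * t ^ (1/3 : ℝ) * R) atTop atTop :=
    tendsto_id.const_mul_atTop (by positivity)
  have hT : Tendsto (fun R : ℝ => ∫ y : ℝ,
      (((t ^ (1/3 : ℝ))⁻¹ * airyTrunc (2 * π * t ^ (1/3 : ℝ) * R)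
        ((x - y) / t ^ (1/3 : ℝ)) : ℝ) : ℂ) * φ y) atTop (𝓝 (U t φ x)) := by
    have hU : U t φ x = ∫ y : ℝ,
        (((t ^ (1/3 : ℝ))⁻¹ * Ai ((x - y) / t ^ (1/3 : ℝ)) : ℝ) : ℂ) * φ y := by
      rw [U, ← integral_smul]
      congr 1
      funext y
      rw [Complex.real_smul]
      push_cast
      ring
    rw [hU]
    set s := t ^ (1/3 : ℝ)
    refine tendsto_integral_filter_of_dominated_convergence
      (fun y => s⁻¹ * ((3 + |x| / s) * ‖φ y‖ + s⁻¹ * (‖y‖ ^ 1 * ‖φ y‖))) ?_ ?_ ?_ ?_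
    · refine Eventually.of_forall fun R => ?_
      have h1 : Continuous fun z => airyTrunc (2 * π * s * R) z := by
        unfold airyTrunc
        refine continuous_const.mul
          (intervalIntegral.continuous_parametric_intervalIntegral_of_continuous' ?_ _ _)
        simp only [Function.uncurry_def]
        fun_prop
      have h2 := φ.continuous
      apply Continuous.aestronglyMeasurable
      fun_prop
    · filter_upwards [eventually_ge_atTop 0] with R hR
      refine Eventually.of_forall fun y => ?_
      have hb := abs_airyTrunc_le (2 * π * s * R) ((x - y) / s) (by positivity)
      have hxy : |(x - y) / s| ≤ |x| / s + |y| / s := by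
        rw [abs_div, abs_of_pos hs, ← add_div]
        gcongr
        exact abs_sub x y
      rw [norm_mul, Complex.norm_real, Real.norm_eq_abs, abs_mul, abs_of_pos (inv_pos.2 hs)]
      calc s⁻¹ * |airyTrunc (2 * π * s * R) ((x - y) / s)| * ‖φ y‖
          ≤ s⁻¹ * (3 + (|x| / s + |y| / s)) * ‖φ y‖ := by
            gcongr
            linarith
        _ = _ := by
            rw [pow_one, Real.norm_eq_abs]
            ring
    · exact ((φ.integrable.norm.const_mul _).add
        ((φ.integrable_pow_mul volume 1).const_mul _)).const_mul _
    · refine Eventually.of_forall fun y => ?_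
      refine Tendsto.mul_const _ ?_
      exact (Complex.continuous_ofReal.tendsto _).comp
        (((tendsto_airyTrunc ((x - y) / s)).comp hscale).const_mul _)
  have hT' : Tendsto (fun R : ℝ => ∫ w in (-R)..R,
      Complex.exp ((2 * π * w * x : ℝ) * Complex.I) * airySymbol t φ w) atTop
      (𝓝 (𝓕⁻ (airySymbol t φ : ℝ → ℂ) x)) := by
    have hF : 𝓕⁻ (airySymbol t φ : ℝ → ℂ) x
        = ∫ w, Complex.exp ((2 * π * w * x : ℝ) * Complex.I) * airySymbol t φ w := by
      rw [Real.fourierInv_eq']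
      congr 1
      funext w
      rw [smul_eq_mul]
      congr 3
      simp [mul_comm, mul_assoc, mul_left_comm]
    rw [hF]
    refine intervalIntegral_tendsto_integral ?_ tendsto_neg_atTop_atBot tendsto_id
    have hg := (airySymbol t φ).integrable (μ := volume)
    have hgc := (airySymbol t φ).continuous
    refine hg.mono (Continuous.aestronglyMeasurable (by fun_prop))
      (Eventually.of_forall fun w => ?_)
    rw [norm_mul, Complex.norm_exp_ofReal_mul_I, one_mul]
  refine tendsto_nhds_unique hT (hT'.congr' ?_)
  filter_upwards [eventually_ge_atTop 0] with R hR
  rw [← integral_trunc_kernel t φ x R hR]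
  simp_rw [scaled_airyTrunc t ht]

/-! ### Normalization of the Fourier transform and Plancherel -/

lemma FT_eq_fourier (f : ℝ → ℂ) (ξ : ℝ) : FT f ξ = 𝓕 f (ξ / (2 * π)) := by
  rw [FT, Real.fourier_real_eq_integral_exp_smul]
  congr 1
  funext x
  rw [smul_eq_mul]
  congr 2
  have : (π : ℂ) ≠ 0 := by exact_mod_cast Real.pi_ne_zero
  push_cast
  field_simp

/-- Plancherel on Schwartz functions in terms of `eLpNorm`. -/
lemma eLpNorm_fourier (f : 𝓢(ℝ, ℂ)) :
    eLpNorm (𝓕 f : 𝓢(ℝ, ℂ)) 2 (volume : Measure ℝ) = eLpNorm f 2 (volume : Measure ℝ) := by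
  have h := SchwartzMap.norm_fourier_toL2_eq f
  rw [SchwartzMap.norm_toLp, SchwartzMap.norm_toLp] at h
  exact (ENNReal.toReal_eq_toReal_iff' ((𝓕 f : 𝓢(ℝ, ℂ)).memLp 2 volume).eLpNorm_ne_top
    (f.memLp 2 volume).eLpNorm_ne_top).1 h

/-- For `t > 0` and Schwartz `φ`, `(U t φ)^(ξ) = e^{itξ³/3} φ̂(ξ)`; consequently `U t`
preserves the `L²` norm (hence extends to an isometry of `L²`). -/
theorem kdv_fourier_multiplier (t : ℝ) (ht : 0 < t) (φ : SchwartzMap ℝ ℂ) :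
    (∀ ξ : ℝ, FT (U t (⇑φ)) ξ = Complex.exp (Complex.I * t * ξ ^ 3 / 3) * FT (⇑φ) ξ) ∧
    eLpNorm (U t (⇑φ)) 2 (volume : Measure ℝ) = eLpNorm (⇑φ) 2 (volume : Measure ℝ) := by
  -- `U t φ` is a Schwartz function whose Fourier transform is `airySymbol t φ`.
  have hU : U t φ = ((𝓕⁻ (airySymbol t φ) : 𝓢(ℝ, ℂ)) : ℝ → ℂ) := by
    rw [U_eq_fourierInv t ht φ, SchwartzMap.fourierInv_coe]
  have hFU : 𝓕 (𝓕⁻ (airySymbol t φ)) = airySymbol t φ := FourierTransform.fourier_fourierInv_eq _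
  constructor
  · intro ξ
    rw [FT_eq_fourier, FT_eq_fourier, hU, ← SchwartzMap.fourier_coe, hFU, airySymbol_apply]
    congr 1
    rw [airyMul]
    congr 1
    rw [mul_div_cancel₀ ξ (by positivity : (2 * π : ℝ) ≠ 0)]
    push_cast
    ring
  · rw [hU, ← eLpNorm_fourier, hFU, ← eLpNorm_fourier φ]
    refine eLpNorm_congr_norm_ae (Eventually.of_forall fun w => ?_)
    rw [airySymbol_apply, norm_mul, norm_airyMul, one_mul, SchwartzMap.fourier_coe]
end
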